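/- Let dA, dB, dC be positive integers and U : Matrix ((Fin dB) × (Fin dC)) (Fin dA) ℂ with Uᴴ * U = 1. Let ρ be a density matrix on Fin dA and set SA = S(ρ), SB = S(tr_C (U * ρ * Uᴴ)), SC = S(tr_B (U * ρ * Uᴴ)). Then: (i) the rate (1/2)·(SA + SB − SC) is achievable with one-way LOCC (C→B) decoding for U; and (ii) if SA ≤ SB, the rate SA is achievable with one-way LOCC (C→B) decoding for U. -/

import Mathlib

/-!
Both rates follow from one fact: every `R` with `R ≤ S(A)` and `R ≤ S(B)` is achievable. Indeed (ii)
is the case `R = S(A)`, and (i) follows because `(S(A) + S(B) - S(C)) / 2` is at most `S(A)` by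
`S(B) ≤ S(A) + S(C)` and at most `S(B)` by `S(A) ≤ S(B) + S(C)`. Both of these are subadditivity for
the pure state `s` on `A`, `B`, `C` that purifies the output state (`entropy_le_add`; Gibbs'
inequality together with Bessel's inequality).

A change of local bases (`AchievableOneWayCB.rotate`) makes `ρ` and both output marginals diagonal.
Write `p`, `μ` for the spectra on `A`, `B` and `s a y c = √(p a) * U (y, c) a`. The code words are
`∑ a, ± √(p a) |a⟩` restricted to sequences `a` that are typical in the sense `p a ≤ κ`, with
independent random signs for each message.

Charlie measures the overcomplete family of all sign vectors `∑ c, ± |c⟩`, suitably normalised.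
Because the `C` marginal is diagonal, his outcome `θ` leaves Bob with pure states whose squared norm
hardly depends on `θ`. Bob discards sequences `y` with `μ y > κ` and applies the square-root
measurement of the states left to him. Its success amplitude for message `i` is the diagonal entry
`(√G) i i` of the square root of the Gram matrix, and `√x ≥ (3 x - x²) / 2` bounds this below by
quantities that are of second and fourth order in the signs (`exists_bob_povm`).

These moments are elementary (`expect_quad`, `expect_quad_sq`). The collision terms are
controlled by the purities of the truncated marginals on `A` and `B`, which are `O(κ)` by Bessel's
inequality (`purity_le`), so a good choice of signs exists once the number of messages is small
compared with `1 / κ` (`exists_code`). Discarding the worse half of the messages turns average error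
into maximal error (`one_shot`).

For `n` copies take `κ = 2 ^ (-n (R - ε / 2))`; the weight outside the typical sets vanishes by an
exponential Markov bound (`tendsto_atypical`), and about `2 ^ (n (R - ε))` messages are decoded
reliably (`achievable_of_diagonal`).
-/

open scoped BigOperators Classical ComplexOrder Matrix

noncomputable section

/-- von Neumann entropy in bits of a (Hermitian) matrix, via its eigenvalues. -/
def vnEntropy {n : Type*} [Fintype n] [DecidableEq n] (ρ : Matrix n n ℂ) : ℝ :=
  if h : ρ.IsHermitian then -∑ i, h.eigenvalues i * Real.logb 2 (h.eigenvalues i) else 0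

/-- A density matrix: positive semidefinite with unit trace. -/
def IsDensityMatrix {n : Type*} [Fintype n] [DecidableEq n] (ρ : Matrix n n ℂ) : Prop :=
  ρ.PosSemidef ∧ ρ.trace = 1

/-- Partial trace over the second (C) factor. -/
def ptraceC {dB dC : ℕ} (M : Matrix (Fin dB × Fin dC) (Fin dB × Fin dC) ℂ) :
    Matrix (Fin dB) (Fin dB) ℂ := fun i k => ∑ j, M (i, j) (k, j)

/-- Partial trace over the first (B) factor. -/
def ptraceB {dB dC : ℕ} (M : Matrix (Fin dB × Fin dC) (Fin dB × Fin dC) ℂ) :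
    Matrix (Fin dC) (Fin dC) ℂ := fun j l => ∑ i, M (i, j) (i, l)

/-- Partial transpose (on the second factor). -/
def ptranspose {dB dC : ℕ} (M : Matrix (Fin dB × Fin dC) (Fin dB × Fin dC) ℂ) :
    Matrix (Fin dB × Fin dC) (Fin dB × Fin dC) ℂ := fun p q => M (p.1, q.2) (q.1, p.2)

/-- The pure state (rank-one projector) associated to a vector. -/
def pureState {ι : Type*} (v : ι → ℂ) : Matrix ι ι ℂ := Matrix.vecMulVec v (star v)

/-- A unit vector. -/
def IsUnitVec {ι : Type*} [Fintype ι] (v : ι → ℂ) : Prop := ∑ x, Complex.normSq (v x) = 1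

/-- Entanglement entropy of a bipartite pure state. -/
def entg {dB dC : ℕ} (v : Fin dB × Fin dC → ℂ) : ℝ := vnEntropy (ptraceC (pureState v))

/-- The n-fold tensor power of an isometry `U : A → B ⊗ C`. -/
def tensorPow {dA dB dC : ℕ} (U : Matrix (Fin dB × Fin dC) (Fin dA) ℂ) (n : ℕ) :
    Matrix (Fin n → Fin dB × Fin dC) (Fin n → Fin dA) ℂ :=
  fun f g => ∏ k, U (f k) (g k)

/-- n-fold partial trace over the C factors. -/
def ptraceCn {dB dC n : ℕ}
    (M : Matrix (Fin n → Fin dB × Fin dC) (Fin n → Fin dB × Fin dC) ℂ) :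
    Matrix (Fin n → Fin dB) (Fin n → Fin dB) ℂ :=
  fun fB gB => ∑ fC : Fin n → Fin dC, M (fun k => (fB k, fC k)) (fun k => (gB k, fC k))

/-- n-fold partial transpose over the C factors. -/
def ptransposeN {dB dC n : ℕ}
    (M : Matrix (Fin n → Fin dB × Fin dC) (Fin n → Fin dB × Fin dC) ℂ) :
    Matrix (Fin n → Fin dB × Fin dC) (Fin n → Fin dB × Fin dC) ℂ :=
  fun f g => M (fun k => ((f k).1, (g k).2)) (fun k => ((g k).1, (f k).2))

/-- A POVM on the n-fold space implemented by one-way LOCC from C to B: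
Charlie measures `(M x)` on `C^n`, sends `x`, and Bob measures `(B x i)` on `B^n`. -/
def IsOneWayLOCC {dB dC n N : ℕ}
    (Np : Fin N → Matrix (Fin n → Fin dB × Fin dC) (Fin n → Fin dB × Fin dC) ℂ) : Prop :=
  ∃ (m : ℕ) (M : Fin m → Matrix (Fin n → Fin dC) (Fin n → Fin dC) ℂ)
    (B : Fin m → Fin N → Matrix (Fin n → Fin dB) (Fin n → Fin dB) ℂ),
    (∀ x, (M x).PosSemidef) ∧ (∑ x, M x) = 1 ∧
    (∀ x i, (B x i).PosSemidef) ∧ (∀ x, (∑ i, B x i) = 1) ∧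
    (∀ i f g, Np i f g =
      ∑ x, B x i (fun k => (f k).1) (fun k => (g k).1) * M x (fun k => (f k).2) (fun k => (g k).2))

/-- The rate R is achievable with one-way LOCC (C→B) decoding for the isometry U. -/
def AchievableOneWayCB {dA dB dC : ℕ} (U : Matrix (Fin dB × Fin dC) (Fin dA) ℂ) (R : ℝ) : Prop :=
  ∀ ε : ℝ, 0 < ε → ∃ n₀ : ℕ, ∀ n : ℕ, n₀ ≤ n →
    ∃ (N : ℕ) (φ : Fin N → (Fin n → Fin dB × Fin dC) → ℂ)
      (Np : Fin N → Matrix (Fin n → Fin dB × Fin dC) (Fin n → Fin dB × Fin dC) ℂ),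
      (2 : ℝ) ^ ((n : ℝ) * (R - ε)) ≤ (N : ℝ) ∧
      (∀ i, IsUnitVec (φ i)) ∧
      (∀ i, ∃ ψ, (tensorPow U n).mulVec ψ = φ i) ∧
      IsOneWayLOCC Np ∧
      (∀ i, 1 - ε ≤ (Matrix.trace (pureState (φ i) * Np i)).re)

/-- Base-2 Shannon entropy. -/
def shannonEntropy {ι : Type*} [Fintype ι] (q : ι → ℝ) : ℝ := -∑ x, q x * Real.logb 2 (q x)

/-! ### Moments of random signs -/

/-- The sign `±1` encoded by a Boolean. -/
def sg (b : Bool) : ℂ := if b then 1 else -1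

lemma sg_not (b : Bool) : sg (!b) = - sg b := by cases b <;> simp [sg]

lemma sg_mul_self (b : Bool) : sg b * sg b = 1 := by cases b <;> simp [sg]

lemma star_sg (b : Bool) : (starRingEnd ℂ) (sg b) = sg b := by cases b <;> simp [sg]

lemma norm_sg (b : Bool) : ‖sg b‖ = 1 := by cases b <;> simp [sg]

section Rademacher

variable {ι : Type*} [Fintype ι] [DecidableEq ι]

/-- Averages of functions that are odd in one of the signs vanish. -/
lemma expect_eq_zero_of_flip (F : (ι → Bool) → ℂ) (k : ι)
    (h : ∀ θ, F (Function.update θ k (!θ k)) = -F θ) : 𝔼 θ, F θ = 0 := by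
  have hinv : Function.Involutive (fun θ : ι → Bool => Function.update θ k (!θ k)) := by
    intro θ
    simp
  have h1 : ∑ θ, F θ = ∑ θ, -F θ := by
    rw [← Equiv.sum_comp hinv.toPerm F]
    exact Finset.sum_congr rfl fun θ _ => h θ
  rw [Finset.sum_neg_distrib] at h1
  rw [Fintype.expect_eq_sum_div_card, self_eq_neg.mp h1, zero_div]

lemma expect_sg_two (c d : ι) :
    𝔼 θ : ι → Bool, sg (θ c) * sg (θ d) = if c = d then 1 else 0 := by
  split_ifs with h
  · subst h
    simp [sg_mul_self]
  · apply expect_eq_zero_of_flip _ c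
    intro θ
    have : d ≠ c := fun e => h e.symm
    simp [this, sg_not]

/-- Fourth moments of independent signs. The third pairing `c = d`, `e = f` is excluded by the
hypotheses. -/
lemma expect_sg_four {c d e f : ι} (hcd : c ≠ d) (hef : e ≠ f) :
    𝔼 θ : ι → Bool, sg (θ c) * sg (θ d) * (sg (θ e) * sg (θ f)) =
      (if c = e ∧ d = f then 1 else 0) + (if c = f ∧ d = e then 1 else 0) := by
  by_cases h1 : c = e
  · subst h1
    by_cases h2 : d = f
    · subst h2
      have : ∀ θ : ι → Bool, sg (θ c) * sg (θ d) * (sg (θ c) * sg (θ d)) = 1 := fun θ => by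
        rw [mul_mul_mul_comm, sg_mul_self, sg_mul_self, one_mul]
      simp [this, hcd]
    · rw [expect_eq_zero_of_flip _ d]
      · simp [h2, hef]
      · intro θ
        have : f ≠ d := fun e => h2 e.symm
        simp [this, hcd, sg_not]
  · by_cases h2 : c = f
    · subst h2
      by_cases h3 : d = e
      · subst h3
        have : ∀ θ : ι → Bool, sg (θ c) * sg (θ d) * (sg (θ d) * sg (θ c)) = 1 := fun θ => by
          rw [mul_comm (sg (θ d)), mul_mul_mul_comm, sg_mul_self, sg_mul_self, one_mul]
        simp [this, hcd]
      · rw [expect_eq_zero_of_flip _ d]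
        · simp [h1, h3]
        · intro θ
          have : e ≠ d := fun e => h3 e.symm
          simp [this, hcd, sg_not]
    · rw [expect_eq_zero_of_flip _ c]
      · simp [h1, h2]
      · intro θ
        have h1' : e ≠ c := fun e => h1 e.symm
        have h2' : f ≠ c := fun e => h2 e.symm
        simp [h1', h2', hcd.symm, sg_not]

lemma expect_quad (h : ι → ι → ℂ) :
    𝔼 θ : ι → Bool, ∑ c, ∑ d, sg (θ c) * sg (θ d) * h c d = ∑ c, h c c := by
  rw [Finset.expect_sum_comm]
  refine Finset.sum_congr rfl fun c _ => ?_
  rw [Finset.expect_sum_comm]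
  simp_rw [← Finset.expect_mul, expect_sg_two]
  simp

/-- Second moment of a quadratic form in independent random signs. It is not assumed Hermitian, which
costs the factor `2`: off the diagonal, `h c d` pairs both with itself and with `h d c`. -/
lemma expect_quad_sq (h : ι → ι → ℂ) :
    𝔼 θ : ι → Bool, ‖∑ c, ∑ d, sg (θ c) * sg (θ d) * h c d‖ ^ 2 ≤
      ‖∑ c, h c c‖ ^ 2 + 2 * ∑ c, ∑ d, (if c = d then 0 else ‖h c d‖ ^ 2) := by
  set T := ∑ c, h c c with hT
  set k : ι → ι → ℂ := fun c d => if c = d then 0 else h c d with hk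
  have hsplit : ∀ θ : ι → Bool, ∑ c, ∑ d, sg (θ c) * sg (θ d) * h c d =
      T + ∑ c, ∑ d, sg (θ c) * sg (θ d) * k c d := by
    intro θ
    rw [hT, ← Finset.sum_add_distrib]
    refine Finset.sum_congr rfl fun c _ => ?_
    rw [← Finset.add_sum_erase _ _ (Finset.mem_univ c),
      ← Finset.add_sum_erase Finset.univ (fun d => sg (θ c) * sg (θ d) * k c d)
        (Finset.mem_univ c)]
    simp only [hk, sg_mul_self, one_mul, if_true, mul_zero, zero_add]
    congr 1
    refine Finset.sum_congr rfl fun d hd => ?_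
    rw [if_neg (Finset.ne_of_mem_erase hd).symm]
  have hk0 : ∀ c, k c c = 0 := fun c => by simp [hk]
  have hmean : 𝔼 θ : ι → Bool, ∑ c, ∑ d, sg (θ c) * sg (θ d) * k c d = 0 := by
    rw [expect_quad]; simp [hk0]
  -- the off-diagonal part has second moment `∑ |k c d|² + k c d * conj (k d c)`
  have hoff : 𝔼 θ : ι → Bool, (∑ c, ∑ d, sg (θ c) * sg (θ d) * k c d) *
      (starRingEnd ℂ) (∑ c, ∑ d, sg (θ c) * sg (θ d) * k c d) =
      ∑ c, ∑ d, (k c d * (starRingEnd ℂ) (k c d) + k c d * (starRingEnd ℂ) (k d c)) := by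
    have : ∀ θ : ι → Bool, (∑ c, ∑ d, sg (θ c) * sg (θ d) * k c d) *
        (starRingEnd ℂ) (∑ c, ∑ d, sg (θ c) * sg (θ d) * k c d) =
        ∑ c, ∑ d, ∑ e, ∑ f, (sg (θ c) * sg (θ d) * (sg (θ e) * sg (θ f))) *
          (k c d * (starRingEnd ℂ) (k e f)) := by
      intro θ
      simp only [map_sum, map_mul, star_sg]
      simp only [Finset.sum_mul]
      simp only [Finset.mul_sum]
      refine Finset.sum_congr rfl fun c _ => Finset.sum_congr rfl fun d _ =>
        Finset.sum_congr rfl fun e _ => Finset.sum_congr rfl fun f _ => ?_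
      ring
    simp_rw [this, Finset.expect_sum_comm, ← Finset.expect_mul]
    refine Finset.sum_congr rfl fun c _ => Finset.sum_congr rfl fun d _ => ?_
    have h4 : ∀ e f, (𝔼 θ : ι → Bool, sg (θ c) * sg (θ d) * (sg (θ e) * sg (θ f))) *
        (k c d * (starRingEnd ℂ) (k e f)) =
        (if e = c then (if f = d then k c d * (starRingEnd ℂ) (k e f) else 0) else 0) +
        (if e = d then (if f = c then k c d * (starRingEnd ℂ) (k e f) else 0) else 0) := by
      intro e f
      by_cases hcd : c = d
      · subst hcd; simp [hk0]
      by_cases hef : e = f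
      · subst hef; simp [hk0]
      rw [expect_sg_four hcd hef]
      generalize k c d * (starRingEnd ℂ) (k e f) = z
      rw [add_mul, ite_mul, ite_mul, one_mul, zero_mul, ← ite_and, ← ite_and]
      congr 1
      · exact if_congr ⟨fun h => ⟨h.1.symm, h.2.symm⟩, fun h => ⟨h.1.symm, h.2.symm⟩⟩ rfl rfl
      · exact if_congr ⟨fun h => ⟨h.2.symm, h.1.symm⟩, fun h => ⟨h.2.symm, h.1.symm⟩⟩ rfl rfl
    simp_rw [h4, Finset.sum_add_distrib]
    simp
  have key : ((𝔼 θ : ι → Bool, ‖∑ c, ∑ d, sg (θ c) * sg (θ d) * h c d‖ ^ 2 : ℝ) : ℂ) =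
      T * (starRingEnd ℂ) T +
      ∑ c, ∑ d, (k c d * (starRingEnd ℂ) (k c d) + k c d * (starRingEnd ℂ) (k d c)) := by
    rw [← hoff]
    have e1 : ((𝔼 θ : ι → Bool, ‖∑ c, ∑ d, sg (θ c) * sg (θ d) * h c d‖ ^ 2 : ℝ) : ℂ) =
      𝔼 θ : ι → Bool, ((‖∑ c, ∑ d, sg (θ c) * sg (θ d) * h c d‖ ^ 2 : ℝ) : ℂ) := by
      simp only [Fintype.expect_eq_sum_div_card]; push_cast; rfl
    rw [e1]
    have e2 : ∀ θ : ι → Bool, ((‖∑ c, ∑ d, sg (θ c) * sg (θ d) * h c d‖ ^ 2 : ℝ) : ℂ) =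
        T * (starRingEnd ℂ) T + (∑ c, ∑ d, sg (θ c) * sg (θ d) * k c d) * (starRingEnd ℂ) T
        + T * (∑ c, ∑ d, sg (θ c) * sg (θ d) * (starRingEnd ℂ) (k c d)) +
        (∑ c, ∑ d, sg (θ c) * sg (θ d) * k c d) *
      (starRingEnd ℂ) (∑ c, ∑ d, sg (θ c) * sg (θ d) * k c d) := by
      intro θ
      rw [hsplit θ]
      push_cast
      rw [← Complex.mul_conj']
      have : (starRingEnd ℂ) (∑ c, ∑ d, sg (θ c) * sg (θ d) * k c d) =
        ∑ c, ∑ d, sg (θ c) * sg (θ d) * (starRingEnd ℂ) (k c d) := by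
        simp only [map_sum, map_mul, star_sg]
      rw [map_add, this]
      ring
    simp_rw [e2, Finset.expect_add_distrib, ← Finset.mul_expect, ← Finset.expect_mul, hmean]
    rw [expect_quad]
    simp [hk0]
  have key2 := congrArg Complex.re key
  rw [Complex.ofReal_re] at key2
  rw [key2, Complex.add_re, Complex.mul_conj', ← Complex.ofReal_pow, Complex.ofReal_re]
  gcongr
  simp only [Complex.re_sum, Complex.add_re, Finset.sum_add_distrib]
  have b : ∀ c d, (k c d * (starRingEnd ℂ) (k d c)).re ≤ (‖k c d‖ ^ 2 + ‖k d c‖ ^ 2) / 2 := by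
    intro c d
    refine (Complex.re_le_norm _).trans ?_
    rw [norm_mul, Complex.norm_conj]
    nlinarith [sq_nonneg (‖k c d‖ - ‖k d c‖)]
  have b1 : ∑ c, ∑ d, (k c d * (starRingEnd ℂ) (k d c)).re ≤ ∑ c, ∑ d, ‖k c d‖ ^ 2 := by
    refine (Finset.sum_le_sum fun c _ => Finset.sum_le_sum fun d _ => b c d).trans ?_
    simp only [← Finset.sum_div, Finset.sum_add_distrib]
    rw [Finset.sum_comm (f := fun c d => ‖k d c‖ ^ 2)]
    linarith
  have b2 : ∀ c d, (k c d * (starRingEnd ℂ) (k c d)).re = ‖k c d‖ ^ 2 := by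
    intro c d
    rw [Complex.mul_conj', ← Complex.ofReal_pow, Complex.ofReal_re]
  have b3 : ∀ c d, (if c = d then 0 else ‖h c d‖ ^ 2) = ‖k c d‖ ^ 2 := by
    intro c d
    simp only [hk]; split_ifs <;> simp
  simp only [b2, b3]
  linarith

end Rademacher

/-! ### The square-root measurement -/

open Matrix in
/-- Spectral theorem in the form of an explicit matrix factorisation. -/
lemma exists_diagonalization {n : Type*} [Fintype n] [DecidableEq n] {A : Matrix n n ℂ}
    (hA : A.IsHermitian) :
    ∃ W : Matrix n n ℂ, Wᴴ * W = 1 ∧ W * Wᴴ = 1 ∧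
      A = W * diagonal (fun i => (hA.eigenvalues i : ℂ)) * Wᴴ := by
  refine ⟨hA.eigenvectorUnitary, ?_, ?_, ?_⟩
  · exact Unitary.coe_star_mul_self hA.eigenvectorUnitary
  · exact Unitary.coe_mul_star_self hA.eigenvectorUnitary
  · have h := hA.spectral_theorem
    rw [Unitary.conjStarAlgAut_apply] at h
    exact h

/-- The tangent-type bound that makes the square root of a Gram matrix comparable to quadratic
expressions in its entries. -/
lemma sqrt_ge_quad {x : ℝ} (hx : 0 ≤ x) : (3 * x - x ^ 2) / 2 ≤ √x := by
  have h := Real.sq_sqrt hx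
  have h0 := Real.sqrt_nonneg x
  set s := √x
  rw [← h]
  nlinarith [mul_nonneg h0 (mul_nonneg (sq_nonneg (s - 1)) (by linarith : 0 ≤ s + 2))]

open Matrix in
/-- Bob's measurement. For vectors `b i`, only whose components in the coordinate set `Q` are used,
the square-root measurement of the truncated vectors `bt i` identifies `i` with probability at least
`(r i) ^ 2`, where `r i` is the diagonal entry of the square root of their Gram matrix. The sums in
the lower bound on `r i` are the diagonal entries of the Gram matrix and of its square. -/
lemma exists_bob_povm {Y : Type*} [Fintype Y] [DecidableEq Y] {N : ℕ} (hN : 0 < N)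
    (Q : Y → Prop) (b bt : Fin N → Y → ℂ) (hbt : ∀ i y, bt i y = if Q y then b i y else 0) :
    ∃ B : Fin N → Matrix Y Y ℂ, (∀ i, (B i).PosSemidef) ∧ ∑ i, B i = 1 ∧
      ∃ r : Fin N → ℝ, ∀ i,
        (3 * (∑ y, ‖bt i y‖ ^ 2) - ∑ j, ‖∑ y, star (bt i y) * bt j y‖ ^ 2) / 2 ≤ r i ∧
        (r i) ^ 2 ≤ (star (b i) ⬝ᵥ (B i *ᵥ b i)).re := by
  set A : Matrix Y (Fin N) ℂ := of fun y i => bt i y with hA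
  have hGp : (Aᴴ * A).PosSemidef := posSemidef_conjTranspose_mul_self A
  have hGe : ∀ i j, (Aᴴ * A) i j = ∑ y, star (bt i y) * bt j y := fun i j => by
    simp [Matrix.mul_apply, hA]
  obtain ⟨W, hW1, hW2, hG⟩ := exists_diagonalization hGp.isHermitian
  set g := hGp.isHermitian.eigenvalues with hg
  have hg0 : ∀ k, 0 ≤ g k := hGp.eigenvalues_nonneg
  set G := Aᴴ * A with hGdef
  -- products of matrices diagonal in the eigenbasis
  have hmul : ∀ u v : Fin N → ℂ, W * diagonal u * Wᴴ * (W * diagonal v * Wᴴ) =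
      W * diagonal (fun k => u k * v k) * Wᴴ := by
    intro u v
    calc W * diagonal u * Wᴴ * (W * diagonal v * Wᴴ)
        = W * diagonal u * (Wᴴ * W) * (diagonal v * Wᴴ) := by simp only [Matrix.mul_assoc]
      _ = _ := by
        rw [hW1, Matrix.mul_one, Matrix.mul_assoc W, ← Matrix.mul_assoc (diagonal u),
          diagonal_mul_diagonal, ← Matrix.mul_assoc]
  have hentry : ∀ (u : Fin N → ℝ) i, (W * diagonal (fun k => (u k : ℂ)) * Wᴴ) i i =
      ((∑ k, u k * ‖W i k‖ ^ 2 : ℝ) : ℂ) := by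
    intro u i
    rw [Matrix.mul_apply]
    push_cast
    refine Finset.sum_congr rfl fun k _ => ?_
    rw [mul_diagonal, conjTranspose_apply, ← Complex.mul_conj']
    simp only [RCLike.star_def]
    ring
  -- eigenvalues of the pseudo-inverse square root of the Gram matrix `G`
  set x : Fin N → ℝ := fun k => if g k = 0 then 0 else 1 / √(g k) with hx
  have hxg : ∀ k, x k * g k = √(g k) := by
    intro k
    simp only [hx]
    split_ifs with h
    · simp [h]
    · rw [one_div, inv_mul_eq_div, Real.div_sqrt]
  set X : Matrix (Fin N) (Fin N) ℂ := W * diagonal (fun k => (x k : ℂ)) * Wᴴ with hX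
  have hXh : Xᴴ = X := by
    rw [hX, conjTranspose_mul, conjTranspose_mul, conjTranspose_conjTranspose, diagonal_conjTranspose,
      ← Matrix.mul_assoc]
    congr 3
    ext k
    simp
  -- the partial isometry of the polar decomposition of `A`, so that `Vᴴ * A` is the root of `G`
  set V := A * X with hV
  have hVA : Vᴴ * A = W * diagonal (fun k => ((√(g k) : ℝ) : ℂ)) * Wᴴ := by
    rw [hV, conjTranspose_mul, hXh, Matrix.mul_assoc, ← hGdef, hG, hX, hmul]
    congr 3
    ext k
    rw [← hxg]; push_cast; rfl
  have hVV : X * (Vᴴ * V) = X := by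
    rw [hV, ← Matrix.mul_assoc Vᴴ, hVA, hX, hmul, hmul]
    congr 3
    ext k
    norm_cast
    simp only [hx]
    split_ifs with h
    · simp
    · have : √(g k) ≠ 0 := fun h' => h ((Real.sqrt_eq_zero (hg0 k)).mp h')
      field_simp
  have hproj : V * Vᴴ * (V * Vᴴ) = V * Vᴴ := by
    calc V * Vᴴ * (V * Vᴴ) = A * (X * (Vᴴ * V)) * Vᴴ := by
          rw [hV]; simp only [Matrix.mul_assoc]
      _ = _ := by rw [hVV]
  have hrest : (1 - V * Vᴴ).PosSemidef := by
    have : (1 - V * Vᴴ) = (1 - V * Vᴴ)ᴴ * (1 - V * Vᴴ) := by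
      have hs : (V * Vᴴ)ᴴ = V * Vᴴ := by simp [conjTranspose_mul]
      rw [conjTranspose_sub, conjTranspose_one, hs, Matrix.sub_mul, Matrix.mul_sub, Matrix.mul_sub, hproj]
      simp
    rw [this]
    exact posSemidef_conjTranspose_mul_self _
  -- the measurement vectors vanish off `Q`, so they do not see the discarded part of `b i`
  set m : Fin N → Y → ℂ := fun i y => V y i with hm
  have hmQ : ∀ i y, ¬ Q y → m i y = 0 := by
    intro i y hy
    simp only [hm, hV, Matrix.mul_apply, hA, of_apply, hbt, if_neg hy, zero_mul,
      Finset.sum_const_zero]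
  have hmb : ∀ i, star (m i) ⬝ᵥ b i = ((∑ k, √(g k) * ‖W i k‖ ^ 2 : ℝ) : ℂ) := by
    intro i
    rw [← hentry (fun k => √(g k)) i, ← hVA, Matrix.mul_apply]
    refine Finset.sum_congr rfl fun y _ => ?_
    by_cases hy : Q y
    · simp [hA, hbt, hy, hm]
    · simp [hA, hbt, hy, hmQ i y hy]
  -- the remaining effect is assigned to an arbitrary message
  refine ⟨fun i => vecMulVec (m i) (star (m i)) + if i = ⟨0, hN⟩ then 1 - V * Vᴴ else 0, ?_, ?_,
    fun i => ∑ k, √(g k) * ‖W i k‖ ^ 2, ?_⟩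
  · intro i
    refine (posSemidef_vecMulVec_self_star _).add ?_
    split_ifs
    · exact hrest
    · exact PosSemidef.zero
  · rw [Finset.sum_add_distrib]
    have : ∑ i, vecMulVec (m i) (star (m i)) = V * Vᴴ := by
      ext y y'
      simp [Matrix.sum_apply, Matrix.mul_apply, vecMulVec_apply, hm]
    rw [this]
    simp
  · intro i
    constructor
    · have h1 : ∑ y, ‖bt i y‖ ^ 2 = ∑ k, g k * ‖W i k‖ ^ 2 := by
        have := hGe i i
        rw [hG, hentry] at this
        have e : ∑ y, star (bt i y) * bt i y = ((∑ y, ‖bt i y‖ ^ 2 : ℝ) : ℂ) := by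
          push_cast
          refine Finset.sum_congr rfl fun y _ => ?_
          rw [← Complex.conj_mul']; rfl
        rw [e] at this
        exact_mod_cast this.symm
      have h2 : ∑ j, ‖∑ y, star (bt i y) * bt j y‖ ^ 2 = ∑ k, g k ^ 2 * ‖W i k‖ ^ 2 := by
        have : (G * G) i i = ((∑ k, g k ^ 2 * ‖W i k‖ ^ 2 : ℝ) : ℂ) := by
          rw [hG, hmul, ← hentry]
          have : ∀ k, (g k : ℂ) * g k = ((g k ^ 2 : ℝ) : ℂ) := fun k => by push_cast; ring
          simp only [this]
        rw [Matrix.mul_apply] at this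
        have e : ∀ j, G i j * G j i = ((‖∑ y, star (bt i y) * bt j y‖ ^ 2 : ℝ) : ℂ) := by
          intro j
          have : G j i = star (G i j) := (hGp.isHermitian.apply j i).symm
          rw [this, ← hGe]
          push_cast
          rw [← Complex.mul_conj']; rfl
        simp_rw [e] at this
        exact_mod_cast this
      rw [h1, h2, Finset.mul_sum, ← Finset.sum_sub_distrib, Finset.sum_div]
      refine Finset.sum_le_sum fun k _ => ?_
      have := mul_le_mul_of_nonneg_right (sqrt_ge_quad (hg0 k)) (sq_nonneg ‖W i k‖)
      linarith
    · have e : star (b i) ⬝ᵥ (vecMulVec (m i) (star (m i)) *ᵥ b i) =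
          (((∑ k, √(g k) * ‖W i k‖ ^ 2) ^ 2 : ℝ) : ℂ) := by
        have h' : star (b i) ⬝ᵥ m i = ((∑ k, √(g k) * ‖W i k‖ ^ 2 : ℝ) : ℂ) := by
          have := congrArg star (hmb i)
          rw [← Matrix.star_dotProduct_star, star_star, dotProduct_comm] at this
          rw [dotProduct_comm]
          simpa using this
        rw [vecMulVec_mulVec, hmb i, dotProduct_smul, h']
        simp [sq]
      rw [Matrix.add_mulVec, dotProduct_add, e, Complex.add_re, Complex.ofReal_re]
      refine le_add_of_nonneg_right ?_
      split_ifs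
      · exact (Complex.nonneg_iff.mp (hrest.dotProduct_mulVec_nonneg (b i))).1
      · simp

/-! ### Random sign codes -/

/-- The two Gram matrices of a rectangular array have the same Hilbert–Schmidt norm. -/
lemma gram_swap {P Y : Type*} [Fintype P] [Fintype Y] (M : P → Y → ℂ) :
    ∑ p, ∑ q, ‖∑ y, star (M p y) * M q y‖ ^ 2 = ∑ y, ∑ y', ‖∑ p, star (M p y) * M p y'‖ ^ 2 := by
  have h : ((∑ p, ∑ q, ‖∑ y, star (M p y) * M q y‖ ^ 2 : ℝ) : ℂ) =
      ((∑ y, ∑ y', ‖∑ p, star (M p y) * M p y'‖ ^ 2 : ℝ) : ℂ) := by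
    have e1 : ∀ p q, ((‖∑ y, star (M p y) * M q y‖ ^ 2 : ℝ) : ℂ) =
        ∑ y, ∑ y', star (M p y) * M q y * (M p y' * star (M q y')) := by
      intro p q
      push_cast
      rw [← Complex.mul_conj', map_sum, Finset.sum_mul_sum]
      simp
    have e2 : ∀ y y', ((‖∑ p, star (M p y) * M p y'‖ ^ 2 : ℝ) : ℂ) =
        ∑ p, ∑ q, star (M p y) * M p y' * (M q y * star (M q y')) := by
      intro p q
      push_cast
      rw [← Complex.mul_conj', map_sum, Finset.sum_mul_sum]
      simp
    rw [Complex.ofReal_sum, Complex.ofReal_sum]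
    simp_rw [Complex.ofReal_sum, e1, e2]
    have c1 : ∀ f : P → P → Y → Y → ℂ, ∑ p, ∑ q, ∑ y, ∑ y', f p q y y' =
        ∑ y, ∑ y', ∑ p, ∑ q, f p q y y' := by
      intro f
      refine ((Finset.sum_congr rfl fun p _ => Finset.sum_comm).trans Finset.sum_comm).trans ?_
      exact Finset.sum_congr rfl fun y _ =>
        (Finset.sum_congr rfl fun p _ => Finset.sum_comm).trans Finset.sum_comm
    rw [c1]
    refine Finset.sum_congr rfl fun y _ => Finset.sum_congr rfl fun y' _ =>
      Finset.sum_congr rfl fun p _ => Finset.sum_congr rfl fun q _ => ?_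
    ring
  exact_mod_cast h

lemma expect_re {ι : Type*} [Fintype ι] (f : ι → ℂ) : 𝔼 i, (f i).re = (𝔼 i, f i).re := by
  rw [Fintype.expect_eq_sum_div_card, Fintype.expect_eq_sum_div_card, ← Complex.re_sum]
  simp

section Code

variable {A Y C : Type*} [Fintype A] [Fintype Y] [Fintype C] {N : ℕ}

/-- Quadratic form in the signs `ε` attached to the rows `i` and `j`. -/
lemma quad_rows (g : A → A → ℂ) (i j : Fin N) (ε : Fin N × A → Bool) :
    ∑ a, ∑ a', sg (ε (i, a)) * sg (ε (j, a')) * g a a' =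
      ∑ p, ∑ q, sg (ε p) * sg (ε q) * (if p.1 = i ∧ q.1 = j then g p.2 q.2 else 0) := by
  simp only [Fintype.sum_prod_type, mul_ite, mul_zero, ite_and]
  rw [Finset.sum_eq_single i (fun k _ hk => by simp [hk]) (by simp)]
  refine Finset.sum_congr rfl fun a _ => ?_
  rw [Finset.sum_eq_single j (fun k _ hk => by simp [hk]) (by simp)]
  simp

variable [DecidableEq A] [DecidableEq C]

lemma expect_rows (g : A → A → ℂ) (i : Fin N) :
    𝔼 ε : Fin N × A → Bool, ∑ a, ∑ a', sg (ε (i, a)) * sg (ε (i, a')) * g a a' = ∑ a, g a a := by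
  simp_rw [quad_rows]
  rw [expect_quad, Fintype.sum_prod_type,
    Finset.sum_eq_single i (fun k _ hk => by simp [hk]) (by simp)]
  simp

lemma expect_rows_sq (g : A → A → ℂ) (i j : Fin N) :
    𝔼 ε : Fin N × A → Bool, ‖∑ a, ∑ a', sg (ε (i, a)) * sg (ε (j, a')) * g a a'‖ ^ 2 ≤
      (if i = j then ‖∑ a, g a a‖ ^ 2 else 0) + 2 * ∑ a, ∑ a', ‖g a a'‖ ^ 2 := by
  simp_rw [quad_rows]
  refine (expect_quad_sq _).trans (add_le_add ?_ ?_)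
  · rw [Fintype.sum_prod_type]
    split_ifs with h
    · subst h
      rw [Finset.sum_eq_single i (fun k _ hk => by simp [hk]) (by simp)]
      simp
    · rw [Finset.sum_eq_zero, norm_zero]
      · simp
      · intro k _
        refine Finset.sum_eq_zero fun a _ => if_neg ?_
        rintro ⟨rfl, rfl⟩
        exact h rfl
  · gcongr
    calc _ ≤ ∑ p : Fin N × A, ∑ q : Fin N × A, (if p.1 = i ∧ q.1 = j then ‖g p.2 q.2‖ ^ 2 else 0) := by
          gcongr with p _ q _
          split_ifs <;> simp
      _ = _ := by
          simp only [Fintype.sum_prod_type, ite_and]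
          rw [Finset.sum_eq_single i (fun k _ hk => by simp [hk]) (by simp)]
          refine Finset.sum_congr rfl fun a _ => ?_
          rw [Finset.sum_eq_single j (fun k _ hk => by simp [hk]) (by simp)]
          simp

/-- Bob's (truncated, unnormalised) state for message `i`, when the code is given by the signs `ε`
and Charlie's outcome is the sign vector `θ`. -/
def bobVec (x : A → Y → C → ℂ) (ε : Fin N × A → Bool) (θ : C → Bool) (i : Fin N) (y : Y) : ℂ :=
  ∑ a, sg (ε (i, a)) * ∑ c, sg (θ c) * x a y c

/-- Error functional of message `i`, averaged over Charlie's outcomes; it bounds the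
loss of success amplitude in `exists_bob_povm`. -/
def codeErr (x : A → Y → C → ℂ) (ε : Fin N × A → Bool) (i : Fin N) : ℝ :=
  1 - 𝔼 θ : C → Bool, (3 * (∑ y, ‖bobVec x ε θ i y‖ ^ 2) -
    ∑ j, ‖∑ y, star (bobVec x ε θ i y) * bobVec x ε θ j y‖ ^ 2) / 2

/-- Random coding: if the subnormalised tripartite vector `x` is nearly normalised, has small
purities on `A` and `Y`, and its `C` marginal is nearly diagonal, then some choice of signs yields
a code of small total error. -/
lemma exists_code (x : A → Y → C → ℂ) {η γ : ℝ}
    (H1 : 1 - η ≤ ∑ c, ∑ a, ∑ y, ‖x a y c‖ ^ 2) (H1' : ∑ c, ∑ a, ∑ y, ‖x a y c‖ ^ 2 ≤ 1)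
    (H2 : ∑ c, ∑ c', (if c = c' then 0 else ‖∑ a, ∑ y, star (x a y c) * x a y c'‖ ^ 2) ≤ η)
    (H3 : ∑ a, ∑ a', ‖∑ c, ∑ y, star (x a y c) * x a' y c‖ ^ 2 ≤ γ)
    (H4 : ∑ y, ∑ y', ‖∑ p : A × C, star (x p.1 y p.2) * x p.1 y' p.2‖ ^ 2 ≤ γ) :
    ∃ ε : Fin N × A → Bool, ∑ i, codeErr x ε i ≤ N * ((5 * η + 6 * N * γ) / 2) := by
  set u : (C → Bool) → A → Y → ℂ := fun θ a y => ∑ c, sg (θ c) * x a y c with hu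
  set g : (C → Bool) → A → A → ℂ := fun θ a a' => ∑ y, star (u θ a y) * u θ a' y with hg
  have hinner : ∀ (ε : Fin N × A → Bool) θ i j,
      ∑ y, star (bobVec x ε θ i y) * bobVec x ε θ j y =
        ∑ a, ∑ a', sg (ε (i, a)) * sg (ε (j, a')) * g θ a a' := by
    intro ε θ i j
    simp only [bobVec, hg, Finset.mul_sum (Finset.univ : Finset Y), star_sum, Finset.sum_mul_sum]
    rw [Finset.sum_comm]
    refine Finset.sum_congr rfl fun a _ => ?_
    rw [Finset.sum_comm]
    refine Finset.sum_congr rfl fun a' _ => Finset.sum_congr rfl fun y _ => ?_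
    rw [star_mul', RCLike.star_def, star_sg]
    simp only [hu]
    ring
  have hg2 : ∀ θ a a', g θ a a' =
      ∑ c, ∑ c', sg (θ c) * sg (θ c') * ∑ y, star (x a y c) * x a' y c' := by
    intro θ a a'
    simp only [hg, hu, Finset.mul_sum (Finset.univ : Finset Y), star_sum, Finset.sum_mul_sum]
    rw [Finset.sum_comm]
    refine Finset.sum_congr rfl fun a _ => ?_
    rw [Finset.sum_comm]
    refine Finset.sum_congr rfl fun a' _ => Finset.sum_congr rfl fun y _ => ?_
    rw [star_mul', RCLike.star_def, star_sg]
    ring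
  have htr : ∀ θ, ∑ a, g θ a a =
      ∑ c, ∑ c', sg (θ c) * sg (θ c') * ∑ a, ∑ y, star (x a y c) * x a y c' := by
    intro θ
    simp only [hg2]
    rw [Finset.sum_comm]
    refine Finset.sum_congr rfl fun c _ => ?_
    rw [Finset.sum_comm]
    refine Finset.sum_congr rfl fun c' _ => ?_
    rw [Finset.mul_sum]
  set w := ∑ c, ∑ a, ∑ y, ‖x a y c‖ ^ 2 with hw
  have hw0 : 0 ≤ w := by positivity
  have hwC : ∑ c, ∑ a, ∑ y, star (x a y c) * x a y c = (w : ℂ) := by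
    rw [hw]
    push_cast
    refine Finset.sum_congr rfl fun c _ => Finset.sum_congr rfl fun a _ =>
      Finset.sum_congr rfl fun y _ => ?_
    rw [← Complex.conj_mul']; rfl
  -- moments over the outcome `θ` of the Gram matrix `g θ` of the vectors left to Bob
  have K1 : 𝔼 θ, ∑ a, g θ a a = (w : ℂ) := by
    simp_rw [htr]
    rw [expect_quad, hwC]
  have K2 : 𝔼 θ, ‖∑ a, g θ a a‖ ^ 2 ≤ 1 + 2 * η := by
    simp_rw [htr]
    refine (expect_quad_sq _).trans ?_
    rw [hwC, Complex.norm_real, Real.norm_of_nonneg hw0]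
    have : w ^ 2 ≤ 1 := pow_le_one₀ hw0 H1'
    linarith
  have K3 : 𝔼 θ, ∑ a, ∑ a', ‖g θ a a'‖ ^ 2 ≤ 3 * γ := by
    rw [Finset.expect_sum_comm]
    simp_rw [Finset.expect_sum_comm Finset.univ Finset.univ (fun θ a' => ‖g θ _ a'‖ ^ 2)]
    simp_rw [hg2]
    refine (Finset.sum_le_sum fun a _ => Finset.sum_le_sum fun a' _ =>
      (expect_quad_sq _).trans (add_le_add le_rfl (mul_le_mul_of_nonneg_left
        (Finset.sum_le_sum fun c _ => Finset.sum_le_sum fun c' _ =>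
          (?_ : _ ≤ ‖∑ y, star (x a y c) * x a' y c'‖ ^ 2)) (by norm_num)))).trans ?_
    · split_ifs
      · positivity
      · exact le_rfl
    · simp_rw [Finset.sum_add_distrib, ← Finset.mul_sum]
      have hs := gram_swap (fun (p : A × C) y => x p.1 y p.2)
      simp only [Fintype.sum_prod_type] at hs H4
      have : ∑ a, ∑ a', ∑ c, ∑ c', ‖∑ y, star (x a y c) * x a' y c'‖ ^ 2 =
          ∑ a, ∑ c, ∑ a', ∑ c', ‖∑ y, star (x a y c) * x a' y c'‖ ^ 2 :=
        Finset.sum_congr rfl fun a _ => Finset.sum_comm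
      rw [this]
      linarith
  -- moments over the code, each reduced to a moment over `θ`
  have M1 : ∀ i, 𝔼 ε : Fin N × A → Bool, 𝔼 θ, ∑ y, ‖bobVec x ε θ i y‖ ^ 2 = w := by
    intro i
    have e : ∀ (ε : Fin N × A → Bool) θ, ∑ y, ‖bobVec x ε θ i y‖ ^ 2 =
        (∑ a, ∑ a', sg (ε (i, a)) * sg (ε (i, a')) * g θ a a').re := by
      intro ε θ
      rw [← hinner, Complex.re_sum]
      refine Finset.sum_congr rfl fun y _ => ?_
      rw [RCLike.star_def, Complex.conj_mul', ← Complex.ofReal_pow, Complex.ofReal_re]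
    simp_rw [e]
    rw [Finset.expect_comm]
    simp_rw [expect_re, expect_rows]
    rw [K1, Complex.ofReal_re]
  have M2 : ∀ i, 𝔼 ε : Fin N × A → Bool, 𝔼 θ,
      ∑ j, ‖∑ y, star (bobVec x ε θ i y) * bobVec x ε θ j y‖ ^ 2 ≤ 1 + 2 * η + 6 * N * γ := by
    intro i
    simp_rw [hinner]
    rw [Finset.expect_comm]
    calc _ ≤ 𝔼 θ, (‖∑ a, g θ a a‖ ^ 2 + N * (2 * ∑ a, ∑ a', ‖g θ a a'‖ ^ 2)) := by
          refine Finset.expect_le_expect fun θ _ => ?_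
          rw [Finset.expect_sum_comm]
          refine (Finset.sum_le_sum fun j _ => expect_rows_sq _ _ _).trans ?_
          rw [Finset.sum_add_distrib]
          simp
      _ = 𝔼 θ, ‖∑ a, g θ a a‖ ^ 2 + N * (2 * 𝔼 θ, ∑ a, ∑ a', ‖g θ a a'‖ ^ 2) := by
          rw [Finset.expect_add_distrib, ← Finset.mul_expect, ← Finset.mul_expect]
      _ ≤ _ := by
          have : (N : ℝ) * (2 * 𝔼 θ, ∑ a, ∑ a', ‖g θ a a'‖ ^ 2) ≤ N * (2 * (3 * γ)) := by gcongr
          linarith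
  have M3 : 𝔼 ε : Fin N × A → Bool, ∑ i, codeErr x ε i ≤ N * ((5 * η + 6 * N * γ) / 2) := by
    rw [Finset.expect_sum_comm]
    have : ∀ i, 𝔼 ε : Fin N × A → Bool, codeErr x ε i ≤ (5 * η + 6 * N * γ) / 2 := by
      intro i
      simp only [codeErr, ← Finset.expect_div, Finset.expect_sub_distrib, ← Finset.mul_expect]
      rw [M1 i, Fintype.expect_const]
      linarith [M2 i]
    refine (Finset.sum_le_sum fun i _ => this i).trans ?_
    simp
  obtain ⟨ε, -, hε⟩ := Finset.exists_le_of_expect_le Finset.univ_nonempty M3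
  exact ⟨ε, hε⟩

end Code

/-! ### Bessel and purity bounds -/

section Bessel

variable {X Z : Type*} [Fintype Z] [DecidableEq X]

/-- Bessel's inequality for an orthogonal, not necessarily normalised, family whose squared norms
are at most `κ` on the index set `T`. -/
lemma bessel_orthogonal {s : X → Z → ℂ} {p : X → ℝ} {κ : ℝ} (hκ : 0 ≤ κ)
    (horth : ∀ x x', ∑ z, star (s x z) * s x' z = if x = x' then (p x : ℂ) else 0)
    (T : Finset X) (hT : ∀ x ∈ T, p x ≤ κ) (v : Z → ℂ) :
    ∑ x ∈ T, ‖∑ z, star (s x z) * v z‖ ^ 2 ≤ κ * ∑ z, ‖v z‖ ^ 2 := by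
  set k : X → ℂ := fun x => ∑ z, star (s x z) * v z with hk
  set S := ∑ x ∈ T, ‖k x‖ ^ 2 with hS
  set r : Z → ℂ := fun z => ∑ x ∈ T, k x * s x z with hr
  have hrv : ∑ z, star (r z) * v z = (S : ℂ) := by
    simp only [hr, star_sum, Finset.sum_mul]
    rw [Finset.sum_comm, hS]
    push_cast
    refine Finset.sum_congr rfl fun x _ => ?_
    rw [← Complex.conj_mul']
    have hkx : k x = ∑ z, star (s x z) * v z := rfl
    calc ∑ z, star (k x * s x z) * v z = (starRingEnd ℂ) (k x) * ∑ z, star (s x z) * v z := by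
          rw [Finset.mul_sum]
          refine Finset.sum_congr rfl fun z _ => ?_
          rw [star_mul', mul_assoc]; rfl
      _ = _ := by rw [← hkx]
  have hrr : ∑ z, ‖r z‖ ^ 2 = ∑ x ∈ T, ‖k x‖ ^ 2 * p x := by
    have : ((∑ z, ‖r z‖ ^ 2 : ℝ) : ℂ) = ((∑ x ∈ T, ‖k x‖ ^ 2 * p x : ℝ) : ℂ) := by
      push_cast
      have e : ∀ z, ((‖r z‖ : ℝ) : ℂ) ^ 2 =
          ∑ x ∈ T, ∑ x' ∈ T, (starRingEnd ℂ) (k x) * k x' * (star (s x z) * s x' z) := by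
        intro z
        rw [← Complex.conj_mul']
        simp only [hr, map_sum, Finset.sum_mul_sum]
        refine Finset.sum_congr rfl fun x _ => Finset.sum_congr rfl fun x' _ => ?_
        simp only [map_mul, RCLike.star_def]
        ring
      simp_rw [e]
      rw [Finset.sum_comm]
      refine Finset.sum_congr rfl fun x hx => ?_
      rw [Finset.sum_comm]
      simp_rw [← Finset.mul_sum, horth]
      simp [hx, Complex.conj_mul']
    exact_mod_cast this
  have hS0 : 0 ≤ S := by positivity
  have h1 : ∑ z, ‖r z‖ ^ 2 ≤ κ * S := by
    rw [hrr, hS, Finset.mul_sum]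
    refine Finset.sum_le_sum fun x hx => ?_
    rw [mul_comm]
    exact mul_le_mul_of_nonneg_right (hT x hx) (sq_nonneg _)
  have h2 : S ≤ ∑ z, ‖r z‖ * ‖v z‖ := by
    calc S = ‖(S : ℂ)‖ := by rw [Complex.norm_real, Real.norm_of_nonneg hS0]
      _ ≤ ∑ z, ‖star (r z) * v z‖ := by rw [← hrv]; exact norm_sum_le _ _
      _ = _ := by simp
  have h3 : S ^ 2 ≤ κ * S * ∑ z, ‖v z‖ ^ 2 := by
    calc S ^ 2 ≤ (∑ z, ‖r z‖ * ‖v z‖) ^ 2 := by gcongr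
      _ ≤ (∑ z, ‖r z‖ ^ 2) * ∑ z, ‖v z‖ ^ 2 := Finset.sum_mul_sq_le_sq_mul_sq _ _ _
      _ ≤ _ := by gcongr
  have hv0 : 0 ≤ κ * ∑ z, ‖v z‖ ^ 2 := by positivity
  rcases hS0.eq_or_lt with h | h
  · rw [← h]; exact hv0
  · nlinarith

variable [Fintype X]

/-- Purity bound: truncating an orthogonal family in both arguments leaves a Gram matrix of
Hilbert–Schmidt norm squared at most (largest retained squared norm) × (total squared norm). -/
lemma purity_le {s : X → Z → ℂ} {p : X → ℝ} {κ : ℝ} (hκ : 0 ≤ κ)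
    (horth : ∀ x x', ∑ z, star (s x z) * s x' z = if x = x' then (p x : ℂ) else 0)
    (T : X → Prop) (hT : ∀ x, T x → p x ≤ κ) (Z0 : Z → Prop) (w : X → Z → ℂ)
    (hw : ∀ x z, w x z = if T x ∧ Z0 z then s x z else 0) :
    ∑ x, ∑ x', ‖∑ z, star (w x z) * w x' z‖ ^ 2 ≤ κ * ∑ x, p x := by
  rw [Finset.sum_comm, Finset.mul_sum]
  refine Finset.sum_le_sum fun x' _ => ?_
  have h1 : ∑ x, ‖∑ z, star (w x z) * w x' z‖ ^ 2 =
      ∑ x ∈ Finset.univ.filter T, ‖∑ z, star (s x z) * w x' z‖ ^ 2 := by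
    rw [Finset.sum_filter]
    refine Finset.sum_congr rfl fun x _ => ?_
    split_ifs with h
    · congr 2
      refine Finset.sum_congr rfl fun z _ => ?_
      by_cases hz : Z0 z
      · simp [hw x z, h, hz]
      · simp [hw x' z, hz]
    · simp [hw x, h]
  rw [h1]
  refine (bessel_orthogonal hκ horth _ (fun x hx => hT x (by simpa using hx)) _).trans ?_
  refine mul_le_mul_of_nonneg_left ?_ hκ
  have h2 : p x' = ∑ z, ‖s x' z‖ ^ 2 := by
    have := horth x' x'
    rw [if_pos rfl] at this
    have h' : ((∑ z, ‖s x' z‖ ^ 2 : ℝ) : ℂ) = p x' := by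
      rw [← this]; push_cast
      exact Finset.sum_congr rfl fun z _ => (Complex.conj_mul' _).symm
    exact_mod_cast h'.symm
  rw [h2]
  refine Finset.sum_le_sum fun z _ => ?_
  rw [hw]
  split_ifs
  · exact le_rfl
  · simp

end Bessel

/-! ### Decoding by local measurements -/

section Decode

variable {A Y C : Type*} [Fintype A] [Fintype Y] [Fintype C]
  [DecidableEq Y] [DecidableEq C] {N : ℕ}

omit [Fintype A] [Fintype Y] [DecidableEq Y] in
lemma expect_norm_sq (z : C → ℂ) :
    𝔼 θ : C → Bool, ‖∑ c, sg (θ c) * z c‖ ^ 2 = ∑ c, ‖z c‖ ^ 2 := by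
  have e : ∀ θ : C → Bool, ‖∑ c, sg (θ c) * z c‖ ^ 2 =
      (∑ c, ∑ d, sg (θ c) * sg (θ d) * (star (z c) * z d)).re := by
    intro θ
    have : ((‖∑ c, sg (θ c) * z c‖ ^ 2 : ℝ) : ℂ) =
        ∑ c, ∑ d, sg (θ c) * sg (θ d) * (star (z c) * z d) := by
      push_cast
      rw [← Complex.conj_mul', map_sum, Finset.sum_mul_sum]
      refine Finset.sum_congr rfl fun c _ => Finset.sum_congr rfl fun d _ => ?_
      rw [map_mul, star_sg, RCLike.star_def]
      ring
    rw [← this, Complex.ofReal_re]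
  simp_rw [e]
  rw [expect_re, expect_quad, Complex.re_sum]
  refine Finset.sum_congr rfl fun c _ => ?_
  rw [RCLike.star_def, Complex.conj_mul', ← Complex.ofReal_pow, Complex.ofReal_re]

omit [Fintype Y] [DecidableEq Y] [DecidableEq C] in
lemma bobVec_eq (x : A → Y → C → ℂ) (ε : Fin N × A → Bool) (θ : C → Bool) (i : Fin N) (y : Y) :
    bobVec x ε θ i y = ∑ c, sg (θ c) * ∑ a, sg (ε (i, a)) * x a y c := by
  simp only [bobVec, Finset.mul_sum]
  rw [Finset.sum_comm]
  refine Finset.sum_congr rfl fun c _ => Finset.sum_congr rfl fun a _ => ?_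
  ring

omit [DecidableEq Y] in
lemma codeErr_nonneg (x : A → Y → C → ℂ) (ε : Fin N × A → Bool) (i : Fin N)
    (h : ∑ y, ∑ c, ‖∑ a, sg (ε (i, a)) * x a y c‖ ^ 2 ≤ 1) : 0 ≤ codeErr x ε i := by
  have h1 : 𝔼 θ, ∑ y, ‖bobVec x ε θ i y‖ ^ 2 ≤ 1 := by
    simp_rw [bobVec_eq]
    rw [Finset.expect_sum_comm]
    simp_rw [expect_norm_sq]
    exact h
  have h2 : ∀ θ, (3 * (∑ y, ‖bobVec x ε θ i y‖ ^ 2) -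
      ∑ j, ‖∑ y, star (bobVec x ε θ i y) * bobVec x ε θ j y‖ ^ 2) / 2 ≤
      (1 + ∑ y, ‖bobVec x ε θ i y‖ ^ 2) / 2 := by
    intro θ
    have e : ∑ y, star (bobVec x ε θ i y) * bobVec x ε θ i y =
        ((∑ y, ‖bobVec x ε θ i y‖ ^ 2 : ℝ) : ℂ) := by
      push_cast
      exact Finset.sum_congr rfl fun y _ => Complex.conj_mul' _
    have h3 := Finset.single_le_sum (f := fun j =>
      ‖∑ y, star (bobVec x ε θ i y) * bobVec x ε θ j y‖ ^ 2)
      (fun j _ => sq_nonneg _) (Finset.mem_univ i)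
    simp only [e, Complex.norm_real, Real.norm_eq_abs, sq_abs] at h3
    nlinarith [sq_nonneg (∑ y, ‖bobVec x ε θ i y‖ ^ 2 - 1)]
  have h3 := Finset.expect_le_expect (s := Finset.univ) fun θ _ => h2 θ
  have h4 : 𝔼 θ, (1 + ∑ y, ‖bobVec x ε θ i y‖ ^ 2) / 2 =
      (1 + 𝔼 θ, ∑ y, ‖bobVec x ε θ i y‖ ^ 2) / 2 := by
    rw [← Finset.expect_div, Finset.expect_add_distrib, Fintype.expect_const]
  rw [h4] at h3
  unfold codeErr
  linarith

omit [Fintype A] [DecidableEq Y] [DecidableEq C] in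
/-- The outcome probability `⟨φ, (∑ₓ Bₓ ⊗ Mₓ) φ⟩` of a one-way LOCC measurement operator. -/
def succProb {X : Type*} [Fintype X] (φ : Y → C → ℂ) (B : X → Matrix Y Y ℂ)
    (M : X → Matrix C C ℂ) : ℂ :=
  ∑ x, ∑ y, ∑ c, ∑ y', ∑ c', star (φ y c) * (B x y y' * M x c c') * φ y' c'

open Matrix in
/-- The decoder for the selected messages `e i`, acting on code words `φ` whose truncation to `Q` is
described by `x` and the signs `ε`. Charlie measures the overcomplete family
of sign vectors, Bob applies the square-root measurement; every message of small `codeErr` is decoded reliably. -/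
lemma exists_decoder (x : A → Y → C → ℂ) (ε : Fin N × A → Bool) (Q : Y → Prop)
    (φ : Fin N → Y → C → ℂ)
    (hφ : ∀ i y c, ∑ a, sg (ε (i, a)) * x a y c = if Q y then φ i y c else 0)
    {n : ℕ} (hn : 0 < n) (e : Fin n → Fin N) (he : Function.Injective e) {D : ℝ} (hD : D ≤ 1)
    (herr : ∀ i, codeErr x ε (e i) ≤ D) :
    ∃ (M : (C → Bool) → Matrix C C ℂ) (B : (C → Bool) → Fin n → Matrix Y Y ℂ),
      (∀ θ, (M θ).PosSemidef) ∧ ∑ θ, M θ = 1 ∧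
      (∀ θ i, (B θ i).PosSemidef) ∧ (∀ θ, ∑ i, B θ i = 1) ∧
      ∀ i, 1 - 2 * D ≤ (succProb (φ (e i)) (fun θ => B θ i) M).re := by
  set b : (C → Bool) → Fin n → Y → ℂ := fun θ i y => ∑ c, sg (θ c) * φ (e i) y c with hb
  have hbt : ∀ θ i y, bobVec x ε θ (e i) y = if Q y then b θ i y else 0 := by
    intro θ i y
    rw [bobVec_eq]
    simp_rw [hφ]
    split_ifs
    · rfl
    · simp
  have hB := fun θ => exists_bob_povm hn Q (b θ) (fun i => bobVec x ε θ (e i)) (hbt θ)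
  choose B hB1 hB2 r hr using hB
  set K : ℝ := (Fintype.card (C → Bool) : ℝ) with hK
  refine ⟨fun θ => ((K⁻¹ : ℝ) : ℂ) • vecMulVec (fun c => sg (θ c)) (star (fun c => sg (θ c))), B,
    ?_, ?_, hB1, hB2, ?_⟩
  · intro θ
    refine (posSemidef_vecMulVec_self_star _).smul ?_
    exact_mod_cast (by positivity : (0 : ℝ) ≤ K⁻¹)
  · ext c d
    rw [Matrix.sum_apply, Matrix.one_apply, ← expect_sg_two c d, Fintype.expect_eq_sum_div_card,
      div_eq_inv_mul, Finset.mul_sum]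
    refine Finset.sum_congr rfl fun θ _ => ?_
    simp [vecMulVec_apply, star_sg, hK]
  · intro i
    have hs : succProb (φ (e i)) (fun θ => B θ i)
        (fun θ => ((K⁻¹ : ℝ) : ℂ) • vecMulVec (fun c => sg (θ c)) (star (fun c => sg (θ c)))) =
        𝔼 θ, star (b θ i) ⬝ᵥ (B θ i *ᵥ b θ i) := by
      rw [Fintype.expect_eq_sum_div_card, div_eq_inv_mul, Finset.mul_sum]
      refine Finset.sum_congr rfl fun θ _ => ?_
      have hcard : ((Fintype.card (C → Bool) : ℕ) : ℂ) = ((K : ℝ) : ℂ) := by simp [hK]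
      rw [hcard]
      have hterm : ∀ y y', ∑ c, ∑ c', star (φ (e i) y c) * (B θ i y y' *
          (((K⁻¹ : ℝ) : ℂ) • vecMulVec (fun c => sg (θ c)) (star (fun c => sg (θ c)))) c c') *
            φ (e i) y' c' = (K : ℂ)⁻¹ * (star (b θ i y) * (B θ i y y' * b θ i y')) := by
        intro y y'
        simp only [hb, star_sum, Finset.sum_mul, Finset.mul_sum]
        rw [Finset.sum_comm]
        refine Finset.sum_congr rfl fun c _ => Finset.sum_congr rfl fun d _ => ?_
        simp only [Matrix.smul_apply, vecMulVec_apply, Pi.star_apply, RCLike.star_def, star_sg,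
          smul_eq_mul, map_mul, Complex.ofReal_inv]
        ring
      simp only [dotProduct, mulVec, Pi.star_apply, Finset.mul_sum]
      refine Finset.sum_congr rfl fun y _ => ?_
      rw [Finset.sum_comm]
      exact Finset.sum_congr rfl fun y' _ => hterm y y'
    rw [hs, ← expect_re]
    have h1 : 1 - D ≤ 𝔼 θ, r θ i := by
      have h2 : ∀ θ, (3 * (∑ y, ‖bobVec x ε θ (e i) y‖ ^ 2) -
          ∑ j, ‖∑ y, star (bobVec x ε θ (e i) y) * bobVec x ε θ j y‖ ^ 2) / 2 ≤ r θ i := by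
        intro θ
        refine le_trans ?_ (hr θ i).1
        gcongr
        -- unselected messages only enlarge the collision sum in `codeErr`
        refine (Finset.sum_map Finset.univ ⟨e, he⟩ (fun j =>
          ‖∑ y, star (bobVec x ε θ (e i) y) * bobVec x ε θ j y‖ ^ 2)).symm.le.trans ?_
        exact Finset.sum_le_sum_of_subset_of_nonneg (Finset.subset_univ _) fun _ _ _ => sq_nonneg _
      have h3 := Finset.expect_le_expect (s := Finset.univ) fun θ _ => h2 θ
      have h4 := herr i
      unfold codeErr at h4
      linarith
    have h5 : (𝔼 θ, r θ i) ^ 2 ≤ 𝔼 θ, (r θ i) ^ 2 := by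
      have := Finset.expect_mul_sq_le_sq_mul_sq Finset.univ (fun θ => r θ i) (fun _ => 1)
      simpa using this
    have h6 : 𝔼 θ, (r θ i) ^ 2 ≤ 𝔼 θ, (star (b θ i) ⬝ᵥ (B θ i *ᵥ b θ i)).re :=
      Finset.expect_le_expect fun θ _ => (hr θ i).2
    have h7 := pow_le_pow_left₀ (by linarith : 0 ≤ 1 - D) h1 2
    have h8 : 1 - 2 * D ≤ (1 - D) ^ 2 := by linarith [sq_nonneg D, sub_sq 1 D]
    linarith

end Decode

/-! ### One-shot coding -/

section OneShot

variable {A Y C : Type*} [Fintype A] [Fintype Y] [Fintype C]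
  [DecidableEq A] [DecidableEq Y] [DecidableEq C]

/-- Markov's inequality for message sets: among `2 N` messages of small total error, `N` have at
most twice the average error. -/
lemma exists_good_messages {N : ℕ} (f : Fin (2 * N) → ℝ) {D : ℝ} (hD : 0 < D) (hf : ∀ i, 0 ≤ f i)
    (hs : ∑ i, f i ≤ (2 * N : ℕ) * D) :
    ∃ e : Fin N → Fin (2 * N), Function.Injective e ∧ ∀ i, f (e i) ≤ 2 * D := by
  set good := Finset.univ.filter fun i => f i ≤ 2 * D with hgood
  have h1 : ((Finset.univ.filter fun i => ¬ f i ≤ 2 * D).card : ℝ) * (2 * D) ≤ ∑ i, f i := by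
    rw [← nsmul_eq_mul]
    refine (Finset.card_nsmul_le_sum _ _ _ fun i hi => ?_).trans
      (Finset.sum_le_sum_of_subset_of_nonneg (Finset.subset_univ _) fun i _ _ => hf i)
    exact (not_le.mp (Finset.mem_filter.mp hi).2).le
  have h2 : (Finset.univ.filter fun i => ¬ f i ≤ 2 * D).card ≤ N := by
    have : ((Finset.univ.filter fun i => ¬ f i ≤ 2 * D).card : ℝ) ≤ N := by
      push_cast at hs
      have : ((Finset.univ.filter fun i => ¬ f i ≤ 2 * D).card : ℝ) * (2 * D) ≤ N * (2 * D) := by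
        linarith
      exact le_of_mul_le_mul_right this (by linarith)
    exact_mod_cast this
  have h3 := Finset.card_filter_add_card_filter_not (s := (Finset.univ : Finset (Fin (2 * N))))
    (fun i => f i ≤ 2 * D)
  rw [Finset.card_univ, Fintype.card_fin] at h3
  have h4 : Fintype.card (Fin N) ≤ Fintype.card good := by
    rw [Fintype.card_fin, Fintype.card_coe, hgood]
    omega
  obtain ⟨e⟩ := Function.Embedding.nonempty_of_card_le h4
  exact ⟨fun i => e i, fun i j h => e.injective (Subtype.ext h),
    fun i => (Finset.mem_filter.mp (e i).2).2⟩

/-- Pythagoras for a combination of mutually orthogonal vectors. -/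
lemma norm_sq_sum_orthogonal {Z : Type*} [Fintype Z] {s : A → Z → ℂ} {p : A → ℝ}
    (horth : ∀ x x', ∑ z, star (s x z) * s x' z = if x = x' then (p x : ℂ) else 0) (g : A → ℂ) :
    ∑ z, ‖∑ a, g a * s a z‖ ^ 2 = ∑ a, ‖g a‖ ^ 2 * p a := by
  have : ((∑ z, ‖∑ a, g a * s a z‖ ^ 2 : ℝ) : ℂ) = ((∑ a, ‖g a‖ ^ 2 * p a : ℝ) : ℂ) := by
    push_cast
    have h1 : ∀ z, ((‖∑ a, g a * s a z‖ : ℝ) : ℂ) ^ 2 =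
        ∑ a, ∑ a', star (g a) * g a' * (star (s a z) * s a' z) := by
      intro z
      rw [← Complex.conj_mul', map_sum, Finset.sum_mul_sum]
      refine Finset.sum_congr rfl fun a _ => Finset.sum_congr rfl fun a' _ => ?_
      simp only [map_mul, RCLike.star_def]
      ring
    simp_rw [h1]
    rw [Finset.sum_comm]
    refine Finset.sum_congr rfl fun a _ => ?_
    rw [Finset.sum_comm]
    simp_rw [← Finset.mul_sum, horth]
    simp [Complex.conj_mul']
  exact_mod_cast this

/-- If truncating to `G` removes little weight, the off-diagonal entries of the Gram matrix stay
small: each equals, up to sign, the corresponding entry for the discarded part. -/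
lemma offdiag_le {Z : Type*} [Fintype Z] (s : Z → C → ℂ)
    (h0 : ∀ c c', c ≠ c' → ∑ z, star (s z c) * s z c' = 0) (G : Z → Prop)
    [DecidablePred G] {η : ℝ} (hη : ∑ z, (if G z then 0 else ∑ c, ‖s z c‖ ^ 2) ≤ η) :
    ∑ c, ∑ c', (if c = c' then 0 else ‖∑ z, if G z then star (s z c) * s z c' else 0‖ ^ 2) ≤
      η ^ 2 := by
  set d : C → ℝ := fun c => ∑ z, if G z then 0 else ‖s z c‖ ^ 2 with hd
  have hd0 : ∀ c, 0 ≤ d c := fun c => Finset.sum_nonneg fun z _ => by split_ifs <;> positivity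
  have hsum : ∑ c, d c = ∑ z, (if G z then 0 else ∑ c, ‖s z c‖ ^ 2) := by
    rw [hd, Finset.sum_comm]
    refine Finset.sum_congr rfl fun z _ => ?_
    split_ifs <;> simp
  have h1 : ∀ c c', (if c = c' then 0 else
      ‖∑ z, if G z then star (s z c) * s z c' else 0‖ ^ 2) ≤ d c * d c' := by
    intro c c'
    split_ifs with h
    · exact mul_nonneg (hd0 _) (hd0 _)
    · have e : (∑ z, if G z then star (s z c) * s z c' else 0) =
          -∑ z, if G z then 0 else star (s z c) * s z c' := by
        rw [eq_neg_iff_add_eq_zero, ← Finset.sum_add_distrib]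
        refine Eq.trans ?_ (h0 c c' h)
        refine Finset.sum_congr rfl fun z _ => ?_
        split_ifs <;> simp
      rw [e, norm_neg]
      have h2 : ‖∑ z, if G z then 0 else star (s z c) * s z c'‖ ≤
          ∑ z, (if G z then 0 else ‖s z c‖) * (if G z then 0 else ‖s z c'‖) := by
        refine (norm_sum_le _ _).trans (Finset.sum_le_sum fun z _ => ?_)
        split_ifs <;> simp
      refine (pow_le_pow_left₀ (norm_nonneg _) h2 2).trans
        ((Finset.sum_mul_sq_le_sq_mul_sq _ _ _).trans (le_of_eq ?_))
      simp only [hd, ite_pow, ne_eq, OfNat.ofNat_ne_zero, not_false_eq_true, zero_pow]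
  calc _ ≤ ∑ c, ∑ c', d c * d c' := Finset.sum_le_sum fun c _ => Finset.sum_le_sum fun c' _ => h1 c c'
    _ = (∑ c, d c) ^ 2 := by rw [sq, Finset.sum_mul_sum]
    _ ≤ η ^ 2 := by
      refine pow_le_pow_left₀ (Finset.sum_nonneg fun c _ => hd0 c) ?_ 2
      rw [hsum]
      exact hη

/-- One-shot coding theorem. Let `s` be a tripartite pure state, `s a = √(p a) • t a`, with diagonal
marginals on `A` and `Y` (with spectra `p`, `μ`) and on `C`. If at most weight `η` of `p` and of `μ`
sits on values above `κ`, then `N` messages can be sent with maximal error `20 η + 96 N κ`, by code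
words in the span of the `t a`. The constants arise from `exists_code` for `2 N` messages with
parameters `2 η` and `4 κ` (the `4` is for normalising the restricted state), a factor `2` from
`exists_good_messages`, and a factor `2` for passing from amplitudes to probabilities. -/
lemma one_shot {s t : A → Y → C → ℂ} {p : A → ℝ} {μ : Y → ℝ}
    (hst : ∀ a y c, s a y c = (√(p a) : ℝ) * t a y c)
    (hp0 : ∀ a, 0 ≤ p a) (hp1 : ∑ a, p a = 1) (hμ1 : ∑ y, μ y = 1)
    (hAo : ∀ a a', ∑ z : C × Y, star (s a z.2 z.1) * s a' z.2 z.1 =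
      if a = a' then (p a : ℂ) else 0)
    (hYo : ∀ y y', ∑ z : A × C, star (s z.1 y z.2) * s z.1 y' z.2 =
      if y = y' then (μ y : ℂ) else 0)
    (hCo : ∀ c c', c ≠ c' → ∑ z : A × Y, star (s z.1 z.2 c) * s z.1 z.2 c' = 0)
    {κ η : ℝ} (hκ : 0 < κ) (hη8 : η ≤ 1 / 8)
    (hA : ∑ a, (if p a ≤ κ then 0 else p a) ≤ η)
    (hY : ∑ y, (if μ y ≤ κ then 0 else μ y) ≤ η)
    {N : ℕ} (hN : 0 < N) (hD : 10 * η + 48 * N * κ ≤ 1) :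
    ∃ (ψ : Fin N → A → ℂ) (φ : Fin N → Y → C → ℂ) (M : (C → Bool) → Matrix C C ℂ)
      (B : (C → Bool) → Fin N → Matrix Y Y ℂ),
      (∀ i y c, φ i y c = ∑ a, ψ i a * t a y c) ∧ (∀ i, ∑ y, ∑ c, ‖φ i y c‖ ^ 2 = 1) ∧
      (∀ θ, (M θ).PosSemidef) ∧ ∑ θ, M θ = 1 ∧
      (∀ θ i, (B θ i).PosSemidef) ∧ (∀ θ, ∑ i, B θ i = 1) ∧
      ∀ i, 1 - (20 * η + 96 * N * κ) ≤ (succProb (φ i) (fun θ => B θ i) M).re := by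
  have hη0 : 0 ≤ η := le_trans (Finset.sum_nonneg fun a _ => by
    split_ifs
    · exact le_rfl
    · exact hp0 a) hA
  set τ : ℝ := ∑ a, if p a ≤ κ then p a else 0 with hτ
  have hτc : τ + ∑ a, (if p a ≤ κ then 0 else p a) = 1 := by
    rw [hτ, ← Finset.sum_add_distrib, ← hp1]
    refine Finset.sum_congr rfl fun a _ => ?_
    split_ifs <;> simp
  have hτη : 1 - η ≤ τ := by linarith
  have hτ2 : 1 / 2 ≤ τ := by linarith
  have hτ0 : 0 < τ := by linarith
  have hsτ : ((√τ : ℝ) : ℂ) ^ 2 = (τ : ℂ) := by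
    rw [← Complex.ofReal_pow, Real.sq_sqrt hτ0.le]
  have hτinv : τ⁻¹ ≤ 2 := by
    rw [inv_le_comm₀ hτ0 two_pos]
    linarith
  have hτinv0 : 0 < τ⁻¹ := inv_pos.mpr hτ0
  have hinv : ((√τ : ℝ) : ℂ)⁻¹ * ((√τ : ℝ) : ℂ)⁻¹ = ((τ⁻¹ : ℝ) : ℂ) := by
    rw [← mul_inv, ← sq, hsτ, Complex.ofReal_inv]
  -- `s` normalised for the restriction to inputs with `p a ≤ κ`; `x` below truncates it on both sides
  set s' : A → Y → C → ℂ := fun a y c => ((√τ : ℝ) : ℂ)⁻¹ * s a y c with hs'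
  have hsinner : ∀ a y c a' y' c', star (s' a y c) * s' a' y' c' =
      ((τ⁻¹ : ℝ) : ℂ) * (star (s a y c) * s a' y' c') := by
    intro a y c a' y' c'
    rw [← hinv]
    simp only [hs', star_mul', star_inv₀, RCLike.star_def, Complex.conj_ofReal]
    ring
  have hsn : ∀ a y c, ‖s' a y c‖ ^ 2 = τ⁻¹ * ‖s a y c‖ ^ 2 := by
    intro a y c
    have := hsinner a y c a y c
    rw [RCLike.star_def, Complex.conj_mul', Complex.conj_mul'] at this
    exact_mod_cast this
  set x : A → Y → C → ℂ := fun a y c => if p a ≤ κ ∧ μ y ≤ κ then s' a y c else 0 with hx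
  have hAn : ∀ a, ∑ c, ∑ y, ‖s a y c‖ ^ 2 = p a := by
    intro a
    have := hAo a a
    simp only [if_true, RCLike.star_def, Complex.conj_mul', Fintype.sum_prod_type] at this
    exact_mod_cast this
  have hYn : ∀ y, ∑ a, ∑ c, ‖s a y c‖ ^ 2 = μ y := by
    intro y
    have := hYo y y
    simp only [if_true, RCLike.star_def, Complex.conj_mul', Fintype.sum_prod_type] at this
    exact_mod_cast this
  -- total weight removed by the truncations
  have e1 : ∀ a, ∑ y, (if p a ≤ κ then 0 else ∑ c, ‖s a y c‖ ^ 2) =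
      if p a ≤ κ then 0 else p a := by
    intro a
    split_ifs
    · simp
    · rw [Finset.sum_comm, hAn]
  have e2 : ∀ y, ∑ a, (if μ y ≤ κ then 0 else ∑ c, ‖s a y c‖ ^ 2) =
      if μ y ≤ κ then 0 else μ y := by
    intro y
    split_ifs
    · simp
    · rw [hYn]
  have hbad1 : ∑ z : A × Y, (if p z.1 ≤ κ ∧ μ z.2 ≤ κ then 0 else ∑ c, ‖s z.1 z.2 c‖ ^ 2) ≤
      1 - τ + η := by
    have h1 : ∀ z : A × Y, (if p z.1 ≤ κ ∧ μ z.2 ≤ κ then 0 else ∑ c, ‖s z.1 z.2 c‖ ^ 2) ≤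
        (if p z.1 ≤ κ then 0 else ∑ c, ‖s z.1 z.2 c‖ ^ 2) +
          (if μ z.2 ≤ κ then 0 else ∑ c, ‖s z.1 z.2 c‖ ^ 2) := by
      intro z
      have : 0 ≤ ∑ c, ‖s z.1 z.2 c‖ ^ 2 := Finset.sum_nonneg fun c _ => sq_nonneg _
      by_cases h1 : p z.1 ≤ κ <;> by_cases h2 : μ z.2 ≤ κ <;> simp [h1, h2, this]
    refine (Finset.sum_le_sum fun z _ => h1 z).trans ?_
    rw [Finset.sum_add_distrib, Fintype.sum_prod_type, Fintype.sum_prod_type_right]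
    simp only [e1, e2]
    linarith
  have hbad : ∑ z : A × Y, (if p z.1 ≤ κ ∧ μ z.2 ≤ κ then 0 else ∑ c, ‖s z.1 z.2 c‖ ^ 2) ≤
      2 * η := by linarith
  have hbad2 : 1 - τ ≤
      ∑ z : A × Y, (if p z.1 ≤ κ ∧ μ z.2 ≤ κ then 0 else ∑ c, ‖s z.1 z.2 c‖ ^ 2) := by
    rw [← hτc, add_sub_cancel_left, Fintype.sum_prod_type]
    refine Finset.sum_le_sum fun a _ => ?_
    rw [← e1 a]
    refine Finset.sum_le_sum fun y _ => ?_
    have : 0 ≤ ∑ c, ‖s a y c‖ ^ 2 := Finset.sum_nonneg fun c _ => sq_nonneg _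
    by_cases h1 : p a ≤ κ <;> by_cases h2 : μ y ≤ κ <;> simp [h1, h2, this]
  have hxn : ∑ c, ∑ a, ∑ y, ‖x a y c‖ ^ 2 = τ⁻¹ * (1 - ∑ z : A × Y,
      (if p z.1 ≤ κ ∧ μ z.2 ≤ κ then 0 else ∑ c, ‖s z.1 z.2 c‖ ^ 2)) := by
    have h1 : ∑ z : A × Y, ∑ c, ‖s z.1 z.2 c‖ ^ 2 = 1 := by
      rw [← hp1, Fintype.sum_prod_type]
      refine Finset.sum_congr rfl fun a _ => ?_
      rw [Finset.sum_comm, hAn]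
    rw [← h1, ← Finset.sum_sub_distrib, Finset.mul_sum]
    have h2 : ∀ c, ∑ a, ∑ y, ‖x a y c‖ ^ 2 = ∑ z : A × Y, ‖x z.1 z.2 c‖ ^ 2 := fun c => by
      rw [Fintype.sum_prod_type]
    simp_rw [h2]
    rw [Finset.sum_comm]
    refine Finset.sum_congr rfl fun z _ => ?_
    simp only [hx]
    split_ifs
    · simp [hsn, Finset.mul_sum]
    · simp
  have H1 : 1 - 2 * η ≤ ∑ c, ∑ a, ∑ y, ‖x a y c‖ ^ 2 := by
    rw [hxn, ← div_eq_inv_mul, le_div_iff₀ hτ0]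
    nlinarith
  have H1' : ∑ c, ∑ a, ∑ y, ‖x a y c‖ ^ 2 ≤ 1 := by
    rw [hxn, ← div_eq_inv_mul, div_le_iff₀ hτ0]
    linarith
  have H2 : ∑ c, ∑ c', (if c = c' then 0 else ‖∑ a, ∑ y, star (x a y c) * x a y c'‖ ^ 2) ≤
      2 * η := by
    have h1 := offdiag_le (fun (z : A × Y) c => s z.1 z.2 c) hCo
      (fun z => p z.1 ≤ κ ∧ μ z.2 ≤ κ) hbad
    have h2 : ∀ c c', ‖∑ a, ∑ y, star (x a y c) * x a y c'‖ ^ 2 = (τ⁻¹) ^ 2 *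
        ‖∑ z : A × Y, if p z.1 ≤ κ ∧ μ z.2 ≤ κ then star (s z.1 z.2 c) * s z.1 z.2 c' else 0‖ ^ 2 := by
      intro c c'
      have e : ∑ a, ∑ y, star (x a y c) * x a y c' = ((τ⁻¹ : ℝ) : ℂ) *
          ∑ z : A × Y, if p z.1 ≤ κ ∧ μ z.2 ≤ κ then star (s z.1 z.2 c) * s z.1 z.2 c' else 0 := by
        rw [Finset.mul_sum, Fintype.sum_prod_type]
        refine Finset.sum_congr rfl fun a _ => Finset.sum_congr rfl fun y _ => ?_
        simp only [hx]
        split_ifs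
        · exact hsinner _ _ _ _ _ _
        · simp
      rw [e, norm_mul, mul_pow, Complex.norm_real, Real.norm_eq_abs, sq_abs]
    have h3 : ∀ c c', (if c = c' then 0 else ‖∑ a, ∑ y, star (x a y c) * x a y c'‖ ^ 2) =
        (τ⁻¹) ^ 2 * (if c = c' then 0 else ‖∑ z : A × Y,
          if p z.1 ≤ κ ∧ μ z.2 ≤ κ then star (s z.1 z.2 c) * s z.1 z.2 c' else 0‖ ^ 2) := by
      intro c c'
      rw [h2]
      split_ifs <;> simp
    simp_rw [h3, ← Finset.mul_sum]
    have h4 : (τ⁻¹) ^ 2 ≤ 4 := by nlinarith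
    calc _ ≤ 4 * (2 * η) ^ 2 := mul_le_mul h4 h1
          (Finset.sum_nonneg fun c _ => Finset.sum_nonneg fun c' _ => by
            split_ifs <;> positivity) (by norm_num)
      _ ≤ 2 * η := by nlinarith
  have hκτ : τ⁻¹ * κ * (τ⁻¹ * 1) ≤ 4 * κ := by
    nlinarith [mul_pos hτinv0 hκ]
  have H3 : ∑ a, ∑ a', ‖∑ c, ∑ y, star (x a y c) * x a' y c‖ ^ 2 ≤ 4 * κ := by
    have h1 := purity_le (s := fun a (z : C × Y) => s' a z.2 z.1) (p := fun a => τ⁻¹ * p a)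
      (κ := τ⁻¹ * κ) (by positivity)
      (by
        intro a a'
        simp only [hsinner, ← Finset.mul_sum, hAo]
        split_ifs <;> simp)
      (fun a => p a ≤ κ) (fun a ha => mul_le_mul_of_nonneg_left ha hτinv0.le)
      (fun z => μ z.2 ≤ κ) (fun a z => x a z.2 z.1) (fun a z => rfl)
    rw [← Finset.mul_sum, hp1] at h1
    simp only [Fintype.sum_prod_type] at h1
    exact h1.trans hκτ
  have H4 : ∑ y, ∑ y', ‖∑ q : A × C, star (x q.1 y q.2) * x q.1 y' q.2‖ ^ 2 ≤ 4 * κ := by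
    have h1 := purity_le (s := fun y (z : A × C) => s' z.1 y z.2) (p := fun y => τ⁻¹ * μ y)
      (κ := τ⁻¹ * κ) (by positivity)
      (by
        intro y y'
        simp only [hsinner, ← Finset.mul_sum, hYo]
        split_ifs <;> simp)
      (fun y => μ y ≤ κ) (fun y hy => mul_le_mul_of_nonneg_left hy hτinv0.le)
      (fun z => p z.1 ≤ κ) (fun y z => x z.1 y z.2) (fun y z => by simp only [hx, and_comm])
    rw [← Finset.mul_sum, hμ1] at h1
    exact h1.trans hκτ
  obtain ⟨ε, hε⟩ := exists_code (N := 2 * N) x H1 H1' H2 H3 H4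
  -- code words `ψ i` in the input space; `g i` are their coefficients with respect to `s`
  set ψ : Fin (2 * N) → A → ℂ := fun i a => if p a ≤ κ then
    sg (ε (i, a)) * (((√τ : ℝ) : ℂ)⁻¹ * (√(p a) : ℝ)) else 0 with hψ
  set g : Fin (2 * N) → A → ℂ := fun i a => if p a ≤ κ then
    sg (ε (i, a)) * ((√τ : ℝ) : ℂ)⁻¹ else 0 with hg
  set φ : Fin (2 * N) → Y → C → ℂ := fun i y c => ∑ a, ψ i a * t a y c with hφ
  have hφg : ∀ i y c, φ i y c = ∑ a, g i a * s a y c := by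
    intro i y c
    refine Finset.sum_congr rfl fun a _ => ?_
    simp only [hψ, hg, hst]
    split_ifs
    · ring
    · simp
  have hφ1 : ∀ i, ∑ c, ∑ y, ‖φ i y c‖ ^ 2 = 1 := by
    intro i
    have h1 := norm_sq_sum_orthogonal (s := fun a (z : C × Y) => s a z.2 z.1) hAo (g i)
    rw [Fintype.sum_prod_type] at h1
    simp_rw [hφg]
    rw [h1]
    have h2 : ∀ a, ‖g i a‖ ^ 2 * p a = τ⁻¹ * (if p a ≤ κ then p a else 0) := by
      intro a
      simp only [hg]
      split_ifs
      · rw [norm_mul, norm_sg, one_mul, norm_inv, Complex.norm_real, Real.norm_eq_abs, inv_pow,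
          sq_abs, Real.sq_sqrt hτ0.le]
      · simp
    simp_rw [h2]
    rw [← Finset.mul_sum, ← hτ, inv_mul_cancel₀ hτ0.ne']
  have hφx : ∀ i y c, ∑ a, sg (ε (i, a)) * x a y c = if μ y ≤ κ then φ i y c else 0 := by
    intro i y c
    split_ifs with h
    · rw [hφg]
      refine Finset.sum_congr rfl fun a _ => ?_
      simp only [hx, hg, h, and_true, hs']
      split_ifs
      · ring
      · simp
    · simp [hx, h]
  have herr0 : ∀ i, 0 ≤ codeErr x ε i := by
    intro i
    apply codeErr_nonneg
    rw [Finset.sum_comm, ← hφ1 i]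
    refine Finset.sum_le_sum fun c _ => Finset.sum_le_sum fun y _ => ?_
    rw [hφx]
    split_ifs
    · exact le_rfl
    · simp
  have hN' : (0 : ℝ) < N := by exact_mod_cast hN
  have hε' : ∑ i, codeErr x ε i ≤ (2 * N : ℕ) * (5 * η + 24 * N * κ) := by
    refine hε.trans (le_of_eq ?_)
    push_cast
    ring
  obtain ⟨e, he, hgood⟩ := exists_good_messages (codeErr x ε) (by positivity) herr0 hε'
  obtain ⟨M, B, hM, hM1, hB, hB1, hsucc⟩ := exists_decoder x ε (fun y => μ y ≤ κ) φ hφx hN e he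
    (by linarith) hgood
  refine ⟨fun i => ψ (e i), fun i => φ (e i), M, B, fun i y c => rfl, fun i => ?_, hM, hM1, hB, hB1,
    fun i => ?_⟩
  · rw [Finset.sum_comm]
    exact hφ1 (e i)
  · refine le_trans (le_of_eq ?_) (hsucc i)
    ring

end OneShot

/-! ### Entropy inequalities -/

section Entropy

variable {X Y Z : Type*} [Fintype X] [Fintype Y] [Fintype Z]

/-- The entropy inequality for a joint distribution `q` for which the conditional weights `q / p`
sum to at most one over `x`; where `p x = 0`, also `q x y z = 0` and the quotient is `0`. It is
Gibbs' inequality, in the form `log t ≤ t - 1`. -/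
lemma entropy_le_of_cond {q : X → Y → Z → ℝ} {p : X → ℝ} {μ : Y → ℝ} {ν : Z → ℝ}
    (hq : ∀ x y z, 0 ≤ q x y z) (hp : ∀ x, ∑ y, ∑ z, q x y z = p x)
    (hμ : ∀ y, ∑ x, ∑ z, q x y z = μ y) (hν : ∀ z, ∑ x, ∑ y, q x y z = ν z) (hp1 : ∑ x, p x = 1)
    (hc : ∀ y z, ∑ x, q x y z / p x ≤ 1) :
    shannonEntropy p ≤ shannonEntropy μ + shannonEntropy ν := by
  have hμ0 : ∀ y, 0 ≤ μ y := fun y => hμ y ▸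
    Finset.sum_nonneg fun _ _ => Finset.sum_nonneg fun _ _ => hq _ _ _
  have hν0 : ∀ z, 0 ≤ ν z := fun z => hν z ▸
    Finset.sum_nonneg fun _ _ => Finset.sum_nonneg fun _ _ => hq _ _ _
  have hqp : ∀ x y z, q x y z ≤ p x := fun x y z => by
    rw [← hp x]
    exact (Finset.single_le_sum (f := fun z => q x y z) (fun _ _ => hq _ _ _)
      (Finset.mem_univ z)).trans (Finset.single_le_sum (f := fun y => ∑ z, q x y z)
        (fun _ _ => Finset.sum_nonneg fun _ _ => hq _ _ _) (Finset.mem_univ y))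
  have hqμ : ∀ x y z, q x y z ≤ μ y := fun x y z => by
    rw [← hμ y]
    exact (Finset.single_le_sum (f := fun z => q x y z) (fun _ _ => hq _ _ _)
      (Finset.mem_univ z)).trans (Finset.single_le_sum (f := fun x => ∑ z, q x y z)
        (fun _ _ => Finset.sum_nonneg fun _ _ => hq _ _ _) (Finset.mem_univ x))
  have hqν : ∀ x y z, q x y z ≤ ν z := fun x y z => by
    rw [← hν z]
    exact (Finset.single_le_sum (f := fun y => q x y z) (fun _ _ => hq _ _ _)
      (Finset.mem_univ y)).trans (Finset.single_le_sum (f := fun x => ∑ y, q x y z)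
        (fun _ _ => Finset.sum_nonneg fun _ _ => hq _ _ _) (Finset.mem_univ x))
  have hq1 : ∑ x, ∑ y, ∑ z, q x y z = 1 := by simp_rw [hp, hp1]
  have hμ1 : ∑ y, μ y = 1 := by
    simp_rw [← hμ]
    rw [Finset.sum_comm, hq1]
  have hν1 : ∑ z, ν z = 1 := by
    simp_rw [← hν]
    rw [Finset.sum_comm, ← hq1]
    exact Finset.sum_congr rfl fun x _ => Finset.sum_comm
  have hpt : ∀ x y z, q x y z * (Real.log (μ y) + Real.log (ν z) - Real.log (p x)) ≤
      μ y * ν z * (q x y z / p x) - q x y z := by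
    intro x y z
    rcases (hq x y z).eq_or_lt with h | h
    · simp [← h]
    · have h1 := h.trans_le (hqp x y z)
      have h2 := h.trans_le (hqμ x y z)
      have h3 := h.trans_le (hqν x y z)
      rw [← Real.log_mul h2.ne' h3.ne', ← Real.log_div (by positivity) h1.ne']
      have := mul_le_mul_of_nonneg_left
        (Real.log_le_sub_one_of_pos (x := μ y * ν z / p x) (by positivity)) h.le
      refine this.trans (le_of_eq ?_)
      ring
  have hsum : ∑ x, ∑ y, ∑ z, q x y z * (Real.log (μ y) + Real.log (ν z) - Real.log (p x)) ≤ 0 := by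
    calc _ ≤ ∑ x, ∑ y, ∑ z, (μ y * ν z * (q x y z / p x) - q x y z) :=
          Finset.sum_le_sum fun x _ => Finset.sum_le_sum fun y _ => Finset.sum_le_sum fun z _ =>
            hpt x y z
      _ = ∑ x, ∑ y, ∑ z, μ y * ν z * (q x y z / p x) - 1 := by
        rw [← hq1]
        simp only [Finset.sum_sub_distrib]
      _ = ∑ y, ∑ z, μ y * ν z * ∑ x, q x y z / p x - 1 := by
        rw [Finset.sum_comm]
        congr 1
        refine Finset.sum_congr rfl fun y _ => ?_
        rw [Finset.sum_comm]
        simp_rw [Finset.mul_sum]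
      _ ≤ ∑ y, ∑ z, μ y * ν z * 1 - 1 := by
        gcongr with y _ z _
        · exact mul_nonneg (hμ0 y) (hν0 z)
        · exact hc y z
      _ = 0 := by
        simp_rw [mul_one, ← Finset.mul_sum, hν1, mul_one, hμ1, sub_self]
  have e : ∑ x, ∑ y, ∑ z, q x y z * (Real.log (μ y) + Real.log (ν z) - Real.log (p x)) =
      ∑ y, μ y * Real.log (μ y) + ∑ z, ν z * Real.log (ν z) - ∑ x, p x * Real.log (p x) := by
    simp only [mul_sub, mul_add, Finset.sum_sub_distrib, Finset.sum_add_distrib]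
    congr 1
    · congr 1
      · rw [Finset.sum_comm]
        refine Finset.sum_congr rfl fun y _ => ?_
        simp_rw [← Finset.sum_mul]
        rw [hμ]
      · have : ∀ x, ∑ y, ∑ z, q x y z * Real.log (ν z) = ∑ z, ∑ y, q x y z * Real.log (ν z) :=
          fun x => Finset.sum_comm
        simp_rw [this]
        rw [Finset.sum_comm]
        refine Finset.sum_congr rfl fun z _ => ?_
        simp_rw [← Finset.sum_mul]
        rw [hν]
    · refine Finset.sum_congr rfl fun x _ => ?_
      simp_rw [← Finset.sum_mul]
      rw [hp]
  rw [e] at hsum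
  have hlog2 : 0 < Real.log 2 := Real.log_pos one_lt_two
  have hdiv := div_nonpos_of_nonpos_of_nonneg hsum hlog2.le
  simp only [shannonEntropy, Real.logb, ← mul_div_assoc, ← Finset.sum_div]
  rw [sub_div, add_div] at hdiv
  linarith

/-- For a tripartite vector `s` whose `X`-slices are orthogonal (so its `X` marginal is diagonal,
with spectrum `p`), the entropy of `p` is at most the sum of the entropies of the squared-modulus
marginals on `Y` and `Z`. When these marginals are spectra of reduced states this is
subadditivity of von Neumann entropy, `S(X) = S(YZ) ≤ S(Y) + S(Z)`. -/
lemma entropy_le_add [DecidableEq X] {s : X → Y → Z → ℂ} {p : X → ℝ} {μ : Y → ℝ} {ν : Z → ℝ}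
    (hX : ∀ x x', ∑ w : Y × Z, star (s x w.1 w.2) * s x' w.1 w.2 =
      if x = x' then (p x : ℂ) else 0)
    (hY : ∀ y, ∑ x, ∑ z, ‖s x y z‖ ^ 2 = μ y) (hZ : ∀ z, ∑ x, ∑ y, ‖s x y z‖ ^ 2 = ν z)
    (hp1 : ∑ x, p x = 1) :
    shannonEntropy p ≤ shannonEntropy μ + shannonEntropy ν := by
  have hp : ∀ x, ∑ y, ∑ z, ‖s x y z‖ ^ 2 = p x := by
    intro x
    have := hX x x
    simp only [if_true, RCLike.star_def, Complex.conj_mul', Fintype.sum_prod_type] at this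
    exact_mod_cast this
  have hp0 : ∀ x, 0 ≤ p x := fun x => hp x ▸ by positivity
  refine entropy_le_of_cond (fun x y z => sq_nonneg ‖s x y z‖) hp hY hZ hp1 fun y z => ?_
  -- Bessel's inequality for the normalised slices and the basis vector at `(y, z)`
  have h := bessel_orthogonal (s := fun x (w : Y × Z) => ((√(p x))⁻¹ : ℝ) * s x w.1 w.2)
    (p := fun x => if p x = 0 then 0 else 1) (κ := 1) zero_le_one
    (by
      intro x x'
      have : ∀ w : Y × Z, star ((((√(p x))⁻¹ : ℝ) : ℂ) * s x w.1 w.2) *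
          ((((√(p x'))⁻¹ : ℝ) : ℂ) * s x' w.1 w.2) = (((√(p x))⁻¹ * (√(p x'))⁻¹ : ℝ) : ℂ) *
            (star (s x w.1 w.2) * s x' w.1 w.2) := by
        intro w
        simp only [star_mul', RCLike.star_def, Complex.conj_ofReal, Complex.ofReal_mul]
        ring
      simp_rw [this]
      rw [← Finset.mul_sum, hX]
      split_ifs with h1 h2
      · simp [h2]
      · subst h1
        rw [← Complex.ofReal_mul, ← mul_inv, Real.mul_self_sqrt (hp0 x), inv_mul_cancel₀ h2]
      · simp)
    Finset.univ (fun x _ => by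
      split_ifs <;> norm_num) (fun w => if w = (y, z) then 1 else 0)
  simp only [mul_ite, mul_one, mul_zero, Finset.sum_ite_eq', Finset.mem_univ, if_true, norm_star,
    norm_mul, mul_pow, one_mul] at h
  refine le_trans (le_of_eq (Finset.sum_congr rfl fun x _ => ?_)) (h.trans (le_of_eq ?_))
  · rw [Complex.norm_real, Real.norm_eq_abs, sq_abs, inv_pow, Real.sq_sqrt (hp0 x),
      div_eq_inv_mul]
  · rw [Finset.sum_eq_single (y, z)] <;> simp +contextual

end Entropy

/-! ### Typical sequences -/

section Typical

/-- Exponential Markov bound for one letter: tilting by a small power `s` turns an entropy gap into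
a factor below one. -/
lemma exists_tilt {X : Type*} [Fintype X] {p : X → ℝ} (hp0 : ∀ x, 0 ≤ p x) (hp1 : ∑ x, p x = 1)
    {r : ℝ} (hr : r < shannonEntropy p) :
    ∃ s : ℝ, 0 < s ∧ ∑ x, p x * (p x * 2 ^ r) ^ s < 1 := by
  set h : ℝ → ℝ := fun s => ∑ x, p x * Real.exp ((Real.log (p x) + r * Real.log 2) * s) with hh
  have h0 : h 0 = 1 := by simp [hh, hp1]
  have hd : HasDerivAt h (∑ x, p x * (Real.log (p x) + r * Real.log 2)) 0 := by
    refine HasDerivAt.fun_sum fun x _ => ?_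
    have h1 : HasDerivAt (fun s : ℝ => (Real.log (p x) + r * Real.log 2) * s)
        (Real.log (p x) + r * Real.log 2) 0 := by
      simpa using (hasDerivAt_id (0 : ℝ)).const_mul (Real.log (p x) + r * Real.log 2)
    simpa using (h1.exp.const_mul (p x))
  -- the derivative at `0` is `(r - H(p)) log 2`
  have hneg : ∑ x, p x * (Real.log (p x) + r * Real.log 2) < 0 := by
    have hlog2 : 0 < Real.log 2 := Real.log_pos one_lt_two
    have e : ∑ x, p x * (Real.log (p x) + r * Real.log 2) =
        (r - shannonEntropy p) * Real.log 2 := by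
      simp only [mul_add, Finset.sum_add_distrib, ← Finset.sum_mul, hp1, shannonEntropy, Real.logb,
        ← mul_div_assoc, ← Finset.sum_div]
      field_simp
      ring
    rw [e]
    exact mul_neg_of_neg_of_pos (by linarith) hlog2
  have hev : ∀ᶠ s in nhdsWithin (0 : ℝ) (Set.Ioi 0), slope h 0 s < 0 := by
    have := (hasDerivAt_iff_tendsto_slope.mp hd).mono_left
      (nhdsWithin_mono 0 (fun s (hs : s ∈ Set.Ioi (0 : ℝ)) => (ne_of_gt hs : s ≠ 0)))
    exact this.eventually_lt_const hneg
  obtain ⟨s, hs, hs0⟩ := (hev.and self_mem_nhdsWithin).exists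
  have hs0 : 0 < s := hs0
  refine ⟨s, hs0, ?_⟩
  rw [slope_def_field, sub_zero, h0, div_lt_iff₀ hs0, zero_mul, sub_neg] at hs
  refine lt_of_le_of_lt (le_of_eq (Finset.sum_congr rfl fun x _ => ?_)) hs
  rcases (hp0 x).eq_or_lt with h1 | h1
  · simp [← h1]
  · have h2 : (0 : ℝ) < 2 ^ r := Real.rpow_pos_of_pos two_pos r
    rw [Real.rpow_def_of_pos (mul_pos h1 h2), Real.log_mul h1.ne' h2.ne',
      Real.log_rpow two_pos]

/-- Sequences of probability above `2 ^ (-n r)` with `r` below the entropy carry vanishing total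
weight. -/
lemma tendsto_atypical {X : Type*} [Fintype X] {p : X → ℝ} (hp0 : ∀ x, 0 ≤ p x)
    (hp1 : ∑ x, p x = 1) {r : ℝ} (hr : r < shannonEntropy p) :
    Filter.Tendsto (fun n : ℕ => ∑ f : Fin n → X,
      if ∏ k, p (f k) ≤ (2 : ℝ) ^ (-(n * r)) then 0 else ∏ k, p (f k)) Filter.atTop (nhds 0) := by
  obtain ⟨s, hs, hlt⟩ := exists_tilt hp0 hp1 hr
  have h2 : (0 : ℝ) < 2 ^ r := Real.rpow_pos_of_pos two_pos r
  have hg0 : 0 ≤ ∑ x, p x * (p x * 2 ^ r) ^ s := Finset.sum_nonneg fun x _ =>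
    mul_nonneg (hp0 x) (Real.rpow_nonneg (mul_nonneg (hp0 x) h2.le) _)
  refine squeeze_zero (fun n => Finset.sum_nonneg fun f _ => ?_) (fun n => ?_)
    (tendsto_pow_atTop_nhds_zero_of_lt_one hg0 hlt)
  · split_ifs
    · exact le_rfl
    · exact Finset.prod_nonneg fun k _ => hp0 _
  · rw [Fintype.sum_pow]
    refine Finset.sum_le_sum fun f _ => ?_
    have hP : 0 ≤ ∏ k, p (f k) := Finset.prod_nonneg fun k _ => hp0 _
    rw [Finset.prod_mul_distrib, Real.finsetProd_rpow _ _
      (fun k _ => mul_nonneg (hp0 _) h2.le), Finset.prod_mul_distrib, Finset.prod_const,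
      Finset.card_univ, Fintype.card_fin]
    split_ifs with h
    · positivity
    · refine le_mul_of_one_le_right hP (Real.one_le_rpow ?_ hs.le)
      have h3 : ((2 : ℝ) ^ r) ^ n = ((2 : ℝ) ^ (-(n * r)))⁻¹ := by
        rw [Real.rpow_neg two_pos.le, inv_inv, ← Real.rpow_natCast, ← Real.rpow_mul two_pos.le,
          mul_comm]
      rw [h3, ← div_eq_mul_inv, one_le_div (Real.rpow_pos_of_pos two_pos _)]
      exact (not_le.mp h).le

end Typical

/-! ### Tensor powers and changes of basis -/

section TensorPower

open Matrix Kronecker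

/-- The `n`-fold tensor power of a matrix. It agrees definitionally with `tensorPow` for matrices of
the shape considered there. -/
def tp {I J : Type*} (M : Matrix I J ℂ) (n : ℕ) : Matrix (Fin n → I) (Fin n → J) ℂ :=
  fun f g => ∏ k, M (f k) (g k)

lemma tp_mul {I J L : Type*} [Fintype J] (M : Matrix I J ℂ) (P : Matrix J L ℂ) (n : ℕ) :
    tp (M * P) n = tp M n * tp P n := by
  ext f g
  simp only [tp, Matrix.mul_apply, Fintype.prod_sum, Finset.prod_mul_distrib]

lemma tp_conjTranspose {I J : Type*} (M : Matrix I J ℂ) (n : ℕ) : tp Mᴴ n = (tp M n)ᴴ := by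
  ext f g
  simp only [tp, conjTranspose_apply, star_prod]

lemma tp_one {I : Type*} [DecidableEq I] (n : ℕ) : tp (1 : Matrix I I ℂ) n = 1 := by
  ext f g
  simp only [tp, Matrix.one_apply]
  split_ifs with h
  · subst h
    simp
  · obtain ⟨k, hk⟩ := Function.ne_iff.mp h
    exact Finset.prod_eq_zero (Finset.mem_univ k) (if_neg hk)

lemma tp_conjTranspose_mul_self {I J : Type*} [Fintype I] [DecidableEq J] {M : Matrix I J ℂ}
    (h : Mᴴ * M = 1) (n : ℕ) : (tp M n)ᴴ * tp M n = 1 := by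
  rw [← tp_conjTranspose, ← tp_mul, h, tp_one]

lemma tp_kronecker {I J I' J' : Type*} (M : Matrix I J ℂ) (P : Matrix I' J' ℂ) (n : ℕ) :
    tp (M ⊗ₖ P) n = (tp M n ⊗ₖ tp P n).submatrix (Equiv.arrowProdEquivProdArrow (Fin n) _ _)
      (Equiv.arrowProdEquivProdArrow (Fin n) _ _) := by
  ext f g
  simp [tp, Finset.prod_mul_distrib, kroneckerMap_apply, Equiv.arrowProdEquivProdArrow]

lemma pureState_mulVec {I J : Type*} [Fintype J] (K : Matrix I J ℂ) (v : J → ℂ) :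
    pureState (K *ᵥ v) = K * pureState v * Kᴴ := by
  rw [pureState, pureState, mul_vecMulVec, vecMulVec_mul, star_mulVec]

lemma trace_pureState {I : Type*} [Fintype I] (v : I → ℂ) :
    (pureState v).trace = ((∑ x, Complex.normSq (v x) : ℝ) : ℂ) := by
  simp [pureState, Matrix.trace, vecMulVec_apply, Complex.mul_conj]

lemma isUnitVec_mulVec {I J : Type*} [Fintype I] [Fintype J] [DecidableEq J] {K : Matrix I J ℂ}
    (hK : Kᴴ * K = 1) {v : J → ℂ} (hv : IsUnitVec v) : IsUnitVec (K *ᵥ v) := by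
  have h := trace_pureState (K *ᵥ v)
  rw [pureState_mulVec, Matrix.mul_assoc, Matrix.trace_mul_comm, Matrix.mul_assoc, hK,
    Matrix.mul_one, trace_pureState] at h
  unfold IsUnitVec at *
  rw [hv] at h
  exact_mod_cast h.symm

/-- Achievability is unaffected by local changes of basis on `A`, `B` and `C`. -/
lemma AchievableOneWayCB.rotate {dA dB dC : ℕ} {U U' : Matrix (Fin dB × Fin dC) (Fin dA) ℂ}
    {VA : Matrix (Fin dA) (Fin dA) ℂ} {VB : Matrix (Fin dB) (Fin dB) ℂ}
    {VC : Matrix (Fin dC) (Fin dC) ℂ} (hB1 : VBᴴ * VB = 1) (hB2 : VB * VBᴴ = 1)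
    (hC1 : VCᴴ * VC = 1) (hC2 : VC * VCᴴ = 1) (h : U * VA = (VB ⊗ₖ VC) * U') {R : ℝ}
    (hU' : AchievableOneWayCB U' R) : AchievableOneWayCB U R := by
  intro ε hε
  obtain ⟨n₀, hn₀⟩ := hU' ε hε
  refine ⟨n₀, fun n hn => ?_⟩
  obtain ⟨N, φ, Np, hN, hφ, hr, ⟨m, M, B, hM, hM1, hB, hB1', hNp⟩, hs⟩ := hn₀ n hn
  set K := tp (VB ⊗ₖ VC) n with hK
  have hK1 : Kᴴ * K = 1 := by
    apply tp_conjTranspose_mul_self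
    rw [conjTranspose_kronecker, ← mul_kronecker_mul, hB1, hC1, one_kronecker_one]
  refine ⟨N, fun i => K *ᵥ φ i, fun i => K * Np i * Kᴴ, hN, fun i => isUnitVec_mulVec hK1 (hφ i),
    fun i => ?_, ?_, fun i => ?_⟩
  · obtain ⟨ψ, hψ⟩ := hr i
    refine ⟨tp VA n *ᵥ ψ, ?_⟩
    change tp U n *ᵥ _ = _
    change tp U' n *ᵥ ψ = _ at hψ
    rw [Matrix.mulVec_mulVec, ← tp_mul, h, tp_mul, ← Matrix.mulVec_mulVec, hψ]
  · refine ⟨m, fun x => tp VC n * M x * (tp VC n)ᴴ, fun x i => tp VB n * B x i * (tp VB n)ᴴ,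
      fun x => (hM x).mul_mul_conjTranspose_same _, ?_,
      fun x i => (hB x i).mul_mul_conjTranspose_same _, fun x => ?_, ?_⟩
    · rw [← Finset.sum_mul, ← Finset.mul_sum, hM1, Matrix.mul_one, ← tp_conjTranspose, ← tp_mul,
        hC2, tp_one]
    · rw [← Finset.sum_mul, ← Finset.mul_sum, hB1', Matrix.mul_one, ← tp_conjTranspose, ← tp_mul,
        hB2, tp_one]
    · intro i f g
      have e : Np i = (∑ x, B x i ⊗ₖ M x).submatrix (Equiv.arrowProdEquivProdArrow (Fin n) _ _)
          (Equiv.arrowProdEquivProdArrow (Fin n) _ _) := by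
        ext f g
        rw [hNp]
        simp [Matrix.sum_apply, kroneckerMap_apply, Equiv.arrowProdEquivProdArrow]
      change (K * Np i * Kᴴ) f g = _
      rw [e, hK, tp_kronecker, conjTranspose_submatrix, submatrix_mul_equiv, submatrix_mul_equiv,
        conjTranspose_kronecker, Finset.mul_sum, Finset.sum_mul]
      simp only [← mul_kronecker_mul]
      simp [Matrix.sum_apply, kroneckerMap_apply, Equiv.arrowProdEquivProdArrow]
  · refine (hs i).trans (le_of_eq ?_)
    congr 1
    simp only [pureState_mulVec]
    rw [show K * pureState (φ i) * Kᴴ * (K * Np i * Kᴴ) =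
      K * (pureState (φ i) * (Kᴴ * K) * (Np i * Kᴴ)) by simp only [Matrix.mul_assoc],
      hK1, Matrix.mul_one, Matrix.trace_mul_comm K, Matrix.mul_assoc, Matrix.mul_assoc, hK1,
      Matrix.mul_one]

lemma sum_pair_prod {I J : Type*} [Fintype I] [Fintype J] {n : ℕ} (F : Fin n → I → J → ℂ) :
    ∑ z : (Fin n → I) × (Fin n → J), ∏ k, F k (z.1 k) (z.2 k) =
      ∏ k, ∑ w : I × J, F k w.1 w.2 := by
  rw [Fintype.prod_sum, ← Equiv.sum_comp (Equiv.arrowProdEquivProdArrow (Fin n) _ _)]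
  rfl

lemma prod_ite_eq_fun {I : Type*} [DecidableEq I] {n : ℕ} (f g : Fin n → I) (p : I → ℝ) :
    ∏ k, (if f k = g k then (p (f k) : ℂ) else 0) =
      if f = g then ((∏ k, p (f k) : ℝ) : ℂ) else 0 := by
  split_ifs with h
  · subst h
    simp
  · obtain ⟨k, hk⟩ := Function.ne_iff.mp h
    exact Finset.prod_eq_zero (Finset.mem_univ k) (if_neg hk)

end TensorPower

/-! ### Achievability for diagonal marginals -/

section Achievability

open Matrix Kronecker Filter

/-- Identifies the trace in the definition of achievability with `succProb`, by splitting each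
sequence over `Y × C` into its two component sequences. -/
lemma trace_pureState_mul {Y C : Type*} [Fintype Y] [Fintype C] {n : ℕ}
    {X : Type*} [Fintype X] (φ : (Fin n → Y) → (Fin n → C) → ℂ)
    (B : X → Matrix (Fin n → Y) (Fin n → Y) ℂ) (M : X → Matrix (Fin n → C) (Fin n → C) ℂ)
    (Np : Matrix (Fin n → Y × C) (Fin n → Y × C) ℂ)
    (hNp : ∀ f g, Np f g = ∑ x, B x (fun k => (f k).1) (fun k => (g k).1) *
        M x (fun k => (f k).2) (fun k => (g k).2)) :
    Matrix.trace (pureState (fun f : Fin n → Y × C => φ (fun k => (f k).1) (fun k => (f k).2)) *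
      Np) = succProb φ B M := by
  have key : ∀ F : (Fin n → Y) → (Fin n → C) → ℂ,
      ∑ f : Fin n → Y × C, F (fun k => (f k).1) (fun k => (f k).2) = ∑ y, ∑ c, F y c := by
    intro F
    rw [← Fintype.sum_prod_type', ← Equiv.sum_comp (Equiv.arrowProdEquivProdArrow (Fin n) _ _)]
    rfl
  rw [Matrix.trace_mul_comm]
  simp only [Matrix.trace, Matrix.diag_apply, Matrix.mul_apply, pureState, vecMulVec_apply,
    Pi.star_apply, hNp]
  rw [key fun y c => ∑ g : Fin n → Y × C, (∑ x, B x y (fun k => (g k).1) *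
    M x c (fun k => (g k).2)) * (φ (fun k => (g k).1) (fun k => (g k).2) * star (φ y c))]
  have h2 : ∀ y c, ∑ g : Fin n → Y × C, (∑ x, B x y (fun k => (g k).1) *
      M x c (fun k => (g k).2)) * (φ (fun k => (g k).1) (fun k => (g k).2) * star (φ y c)) =
      ∑ x, ∑ y', ∑ c', star (φ y c) * (B x y y' * M x c c') * φ y' c' := by
    intro y c
    rw [key fun y' c' => (∑ x, B x y y' * M x c c') * (φ y' c' * star (φ y c))]
    simp only [Finset.sum_mul]
    have : ∀ y', ∑ c', ∑ x, B x y y' * M x c c' * (φ y' c' * star (φ y c)) =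
        ∑ x, ∑ c', star (φ y c) * (B x y y' * M x c c') * φ y' c' := by
      intro y'
      rw [Finset.sum_comm]
      refine Finset.sum_congr rfl fun x _ => Finset.sum_congr rfl fun c' _ => ?_
      ring
    simp_rw [this]
    exact Finset.sum_comm
  simp_rw [h2, succProb]
  have h3 : ∀ y, ∑ c, ∑ x, ∑ y', ∑ c', star (φ y c) * (B x y y' * M x c c') * φ y' c' =
      ∑ x, ∑ c, ∑ y', ∑ c', star (φ y c) * (B x y y' * M x c c') * φ y' c' :=
    fun y => Finset.sum_comm
  simp_rw [h3]
  exact Finset.sum_comm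

/-- A single message can always be transmitted; this covers rates `R - ε ≤ 0`. -/
lemma trivial_code {dA dB dC : ℕ} (hA : 0 < dA) {U : Matrix (Fin dB × Fin dC) (Fin dA) ℂ}
    (hU : Uᴴ * U = 1) (n : ℕ) :
    ∃ (φ : Fin 1 → (Fin n → Fin dB × Fin dC) → ℂ)
      (Np : Fin 1 → Matrix (Fin n → Fin dB × Fin dC) (Fin n → Fin dB × Fin dC) ℂ),
      (∀ i, IsUnitVec (φ i)) ∧ (∀ i, ∃ ψ, (tensorPow U n).mulVec ψ = φ i) ∧
      IsOneWayLOCC Np ∧ (∀ i, (Matrix.trace (pureState (φ i) * Np i)).re = 1) := by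
  set ψ : (Fin n → Fin dA) → ℂ := Pi.single (fun _ => ⟨0, hA⟩) 1 with hψ
  have hψ1 : IsUnitVec ψ := by
    unfold IsUnitVec
    rw [Finset.sum_eq_single (fun _ => ⟨0, hA⟩)]
    · simp [hψ]
    · intro f _ hf
      simp [hψ, hf]
    · simp
  have hφ : IsUnitVec (tp U n *ᵥ ψ) := isUnitVec_mulVec (tp_conjTranspose_mul_self hU n) hψ1
  refine ⟨fun _ => tp U n *ᵥ ψ, fun _ => 1, fun _ => hφ, fun _ => ⟨ψ, rfl⟩,
    ⟨1, fun _ => 1, fun _ _ => 1, fun _ => Matrix.PosSemidef.one, by simp,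
      fun _ _ => Matrix.PosSemidef.one, by simp, ?_⟩, fun i => ?_⟩
  · intro i f g
    simp only [Finset.univ_unique, Finset.sum_const, Finset.card_singleton, one_smul,
      Matrix.one_apply]
    by_cases h : f = g
    · simp [h]
    · rw [if_neg h]
      by_cases h1 : (fun k => (f k).1) = fun k => (g k).1
      · rw [if_neg (c := (fun k => (f k).2) = fun k => (g k).2), mul_zero]
        intro h2
        exact h (funext fun k => Prod.ext (congrFun h1 k) (congrFun h2 k))
      · rw [if_neg h1, zero_mul]
  · simp only [Matrix.mul_one, trace_pureState]
    unfold IsUnitVec at hφ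
    rw [hφ]
    simp

/-- If the `B` and `C` marginals and the input state are diagonal, every rate at most the
entropies of the input and of Bob's output is achievable. -/
lemma achievable_of_diagonal {dA dB dC : ℕ} (hA : 0 < dA)
    {U : Matrix (Fin dB × Fin dC) (Fin dA) ℂ} (hU : Uᴴ * U = 1) {p : Fin dA → ℝ} {μ : Fin dB → ℝ}
    {s : Fin dA → Fin dB → Fin dC → ℂ} (hs : ∀ a y c, s a y c = (√(p a) : ℝ) * U (y, c) a)
    (hp0 : ∀ a, 0 ≤ p a) (hp1 : ∑ a, p a = 1) (hμ0 : ∀ y, 0 ≤ μ y) (hμ1 : ∑ y, μ y = 1)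
    (hAo : ∀ a a', ∑ z : Fin dC × Fin dB, star (s a z.2 z.1) * s a' z.2 z.1 =
      if a = a' then (p a : ℂ) else 0)
    (hYo : ∀ y y', ∑ z : Fin dA × Fin dC, star (s z.1 y z.2) * s z.1 y' z.2 =
      if y = y' then (μ y : ℂ) else 0)
    (hCo : ∀ c c', c ≠ c' → ∑ z : Fin dA × Fin dB, star (s z.1 z.2 c) * s z.1 z.2 c' = 0)
    {R : ℝ} (hRp : R ≤ shannonEntropy p) (hRμ : R ≤ shannonEntropy μ) :
    AchievableOneWayCB U R := by
  intro ε hε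
  by_cases hRε : R - ε ≤ 0
  · refine ⟨0, fun n _ => ?_⟩
    obtain ⟨φ, Np, h1, h2, h3, h4⟩ := trivial_code hA hU n
    refine ⟨1, φ, Np, ?_, h1, h2, h3, fun i => by rw [h4]; linarith⟩
    rw [Nat.cast_one]
    exact Real.rpow_le_one_of_one_le_of_nonpos one_le_two
      (mul_nonpos_of_nonneg_of_nonpos (Nat.cast_nonneg n) hRε)
  push Not at hRε
  -- the typicality exponent `r` lies strictly between the entropy and the rate `R - ε`
  set r := R - ε / 2 with hr
  have hη := (tendsto_atypical hp0 hp1 (r := r) (by linarith)).add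
    (tendsto_atypical hμ0 hμ1 (r := r) (by linarith))
  set η : ℕ → ℝ := fun n => (∑ f : Fin n → Fin dA,
      if ∏ k, p (f k) ≤ (2 : ℝ) ^ (-(n * r)) then 0 else ∏ k, p (f k)) +
    (∑ f : Fin n → Fin dB,
      if ∏ k, μ (f k) ≤ (2 : ℝ) ^ (-(n * r)) then 0 else ∏ k, μ (f k)) with hηdef
  have hgeo : Tendsto (fun n : ℕ => ((2 : ℝ) ^ (-(ε / 2))) ^ n) atTop (nhds 0) :=
    tendsto_pow_atTop_nhds_zero_of_lt_one (Real.rpow_nonneg two_pos.le _)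
      (Real.rpow_lt_one_of_one_lt_of_neg one_lt_two (by linarith))
  -- `20` and `96` are the constants of `one_shot`; rounding the number of messages doubles the `96`
  have htot : Tendsto (fun n : ℕ => 20 * η n + 192 * ((2 : ℝ) ^ (-(ε / 2))) ^ n) atTop
      (nhds 0) := by
    simpa using (hη.const_mul 20).add (hgeo.const_mul 192)
  obtain ⟨n₀, hn₀⟩ := Filter.eventually_atTop.mp
    (htot.eventually_lt_const (lt_min hε one_pos))
  refine ⟨n₀, fun n hn => ?_⟩
  have hn := (hn₀ n hn).le
  set κ : ℝ := (2 : ℝ) ^ (-(n * r)) with hκ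
  have hκ0 : 0 < κ := Real.rpow_pos_of_pos two_pos _
  set P : ℝ := (2 : ℝ) ^ ((n : ℝ) * (R - ε)) with hP
  have hP1 : 1 ≤ P := Real.one_le_rpow one_le_two (by positivity)
  set N : ℕ := ⌈P⌉₊ with hN
  have hN0 : 0 < N := Nat.ceil_pos.mpr (by linarith)
  have hN2 : (N : ℝ) ≤ 2 * P := by
    have := Nat.ceil_lt_add_one (a := P) (by linarith)
    linarith
  have hPκ : P * κ = ((2 : ℝ) ^ (-(ε / 2))) ^ n := by
    rw [hP, hκ, ← Real.rpow_add two_pos, ← Real.rpow_natCast, ← Real.rpow_mul two_pos.le]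
    congr 1
    rw [hr]
    ring
  have hNκ : N * κ ≤ 2 * ((2 : ℝ) ^ (-(ε / 2))) ^ n := by
    rw [← hPκ, ← mul_assoc]
    exact mul_le_mul_of_nonneg_right hN2 hκ0.le
  have hNκ0 : 0 < N * κ := mul_pos (by exact_mod_cast hN0) hκ0
  have hPp0 : ∀ f : Fin n → Fin dA, 0 ≤ ∏ k, p (f k) := fun f =>
    Finset.prod_nonneg fun k _ => hp0 _
  have hPμ0 : ∀ f : Fin n → Fin dB, 0 ≤ ∏ k, μ (f k) := fun f =>
    Finset.prod_nonneg fun k _ => hμ0 _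
  have hηp : ∑ f : Fin n → Fin dA, (if ∏ k, p (f k) ≤ κ then 0 else ∏ k, p (f k)) ≤ η n := by
    rw [hηdef]
    refine le_add_of_nonneg_right (Finset.sum_nonneg fun f _ => ?_)
    split_ifs
    · exact le_rfl
    · exact hPμ0 f
  have hημ : ∑ f : Fin n → Fin dB, (if ∏ k, μ (f k) ≤ κ then 0 else ∏ k, μ (f k)) ≤ η n := by
    rw [hηdef]
    refine le_add_of_nonneg_left (Finset.sum_nonneg fun f _ => ?_)
    split_ifs
    · exact le_rfl
    · exact hPp0 f
  have hn1 := hn.trans (min_le_right _ _)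
  have hn2 := hn.trans (min_le_left _ _)
  obtain ⟨ψ, φ, M, B, hφ, hφ1, hM, hM1, hB, hB1, hsucc⟩ := one_shot
    (A := Fin n → Fin dA) (Y := Fin n → Fin dB) (C := Fin n → Fin dC)
    (s := fun a y c => ∏ k, s (a k) (y k) (c k))
    (t := fun a y c => ∏ k, U (y k, c k) (a k))
    (p := fun a => ∏ k, p (a k)) (μ := fun y => ∏ k, μ (y k))
    (by
      intro a y c
      simp only [hs, Finset.prod_mul_distrib]
      rw [Real.sqrt_prod _ (fun k _ => hp0 _)]
      push_cast
      rfl)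
    hPp0 (by rw [← Fintype.sum_pow, hp1, one_pow]) (by rw [← Fintype.sum_pow, hμ1, one_pow])
    (by
      intro a a'
      simp only [star_prod, ← Finset.prod_mul_distrib]
      rw [sum_pair_prod (fun k c y => star (s (a k) y c) * s (a' k) y c)]
      simp only [hAo]
      exact prod_ite_eq_fun a a' p)
    (by
      intro y y'
      simp only [star_prod, ← Finset.prod_mul_distrib]
      rw [sum_pair_prod (fun k a c => star (s a (y k) c) * s a (y' k) c)]
      simp only [hYo]
      exact prod_ite_eq_fun y y' μ)
    (by
      intro c c' hcc
      simp only [star_prod, ← Finset.prod_mul_distrib]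
      rw [sum_pair_prod (fun k a y => star (s a y (c k)) * s a y (c' k))]
      obtain ⟨k, hk⟩ := Function.ne_iff.mp hcc
      exact Finset.prod_eq_zero (Finset.mem_univ k) (hCo _ _ hk))
    hκ0 (by linarith) hηp hημ hN0 (by linarith)
  set e := (Fintype.equivFin ((Fin n → Fin dC) → Bool)).symm with he
  refine ⟨N, fun i f => φ i (fun k => (f k).1) (fun k => (f k).2), fun i f g =>
    ∑ θ, B θ i (fun k => (f k).1) (fun k => (g k).1) * M θ (fun k => (f k).2) (fun k => (g k).2),
    Nat.le_ceil _, fun i => ?_, fun i => ⟨ψ i, ?_⟩,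
    ⟨_, fun x => M (e x), fun x => B (e x), fun x => hM _, ?_, fun x => hB _, fun x => hB1 _, ?_⟩,
    fun i => ?_⟩
  · unfold IsUnitVec
    rw [← hφ1 i, ← Fintype.sum_prod_type',
      ← Equiv.sum_comp (Equiv.arrowProdEquivProdArrow (Fin n) _ _)]
    simp only [Complex.normSq_eq_norm_sq]
    rfl
  · ext f
    simp only [hφ, Matrix.mulVec, dotProduct, tensorPow]
    exact Finset.sum_congr rfl fun a _ => mul_comm _ _
  · rw [Equiv.sum_comp e M, hM1]
  · intro i f g
    exact (Equiv.sum_comp e (fun θ => B θ i (fun k => (f k).1) (fun k => (g k).1) *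
      M θ (fun k => (f k).2) (fun k => (g k).2))).symm
  · rw [trace_pureState_mul (φ i) (fun θ => B θ i) M _ fun _ _ => rfl]
    refine le_trans ?_ (hsucc i)
    linarith

end Achievability

/-! ### Reduction to diagonal marginals -/

section Diagonalise

open Matrix Kronecker

variable {dA dB dC : ℕ}

/-- Local unitaries commute with the partial trace; only the traced-out factor must be isometric. -/
lemma ptraceC_conj {P : Matrix (Fin dB) (Fin dB) ℂ} {Q : Matrix (Fin dC) (Fin dC) ℂ}
    (hQ : Qᴴ * Q = 1) (M : Matrix (Fin dB × Fin dC) (Fin dB × Fin dC) ℂ) :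
    ptraceC ((P ⊗ₖ Q) * M * (P ⊗ₖ Q)ᴴ) = P * ptraceC M * Pᴴ := by
  have hQ' : ∀ c c', ∑ j, Q j c * star (Q j c') = if c = c' then 1 else 0 := by
    intro c c'
    have := congrFun (congrFun hQ c') c
    simp only [Matrix.mul_apply, conjTranspose_apply, Matrix.one_apply] at this
    simp only [mul_comm (Q _ c), this, eq_comm]
  ext i k
  have e : ∀ j, ((P ⊗ₖ Q) * M * (P ⊗ₖ Q)ᴴ) (i, j) (k, j) = ∑ w' : Fin dB × Fin dC,
      ∑ w : Fin dB × Fin dC, P i w.1 * M w w' * star (P k w'.1) *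
        (Q j w.2 * star (Q j w'.2)) := by
    intro j
    simp only [Matrix.mul_apply, conjTranspose_apply, kroneckerMap_apply, Finset.sum_mul, star_mul']
    refine Finset.sum_congr rfl fun w' _ => Finset.sum_congr rfl fun w _ => ?_
    ring
  have hL : ptraceC ((P ⊗ₖ Q) * M * (P ⊗ₖ Q)ᴴ) i k =
      ∑ j, ((P ⊗ₖ Q) * M * (P ⊗ₖ Q)ᴴ) (i, j) (k, j) := rfl
  have hM : ∀ b b', ptraceC M b b' = ∑ c, M (b, c) (b', c) := fun _ _ => rfl
  simp only [hL, e]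
  rw [Finset.sum_comm]
  have e2 : ∀ w' : Fin dB × Fin dC, ∑ j, ∑ w : Fin dB × Fin dC,
      P i w.1 * M w w' * star (P k w'.1) * (Q j w.2 * star (Q j w'.2)) =
      ∑ b, P i b * M (b, w'.2) w' * star (P k w'.1) := by
    intro w'
    rw [Finset.sum_comm]
    simp_rw [← Finset.mul_sum, hQ', Fintype.sum_prod_type]
    simp
  simp_rw [e2, Fintype.sum_prod_type, Matrix.mul_apply, conjTranspose_apply, hM, Finset.mul_sum,
    Finset.sum_mul]
  exact Finset.sum_congr rfl fun b' _ => Finset.sum_comm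

lemma ptraceB_conj {P : Matrix (Fin dB) (Fin dB) ℂ} {Q : Matrix (Fin dC) (Fin dC) ℂ}
    (hP : Pᴴ * P = 1) (M : Matrix (Fin dB × Fin dC) (Fin dB × Fin dC) ℂ) :
    ptraceB ((P ⊗ₖ Q) * M * (P ⊗ₖ Q)ᴴ) = Q * ptraceB M * Qᴴ := by
  have hP' : ∀ b b', ∑ i, P i b * star (P i b') = if b = b' then 1 else 0 := by
    intro b b'
    have := congrFun (congrFun hP b') b
    simp only [Matrix.mul_apply, conjTranspose_apply, Matrix.one_apply] at this
    simp only [mul_comm (P _ b), this, eq_comm]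
  ext j l
  have e : ∀ i, ((P ⊗ₖ Q) * M * (P ⊗ₖ Q)ᴴ) (i, j) (i, l) = ∑ w' : Fin dB × Fin dC,
      ∑ w : Fin dB × Fin dC, Q j w.2 * M w w' * star (Q l w'.2) *
        (P i w.1 * star (P i w'.1)) := by
    intro i
    simp only [Matrix.mul_apply, conjTranspose_apply, kroneckerMap_apply, Finset.sum_mul, star_mul']
    refine Finset.sum_congr rfl fun w' _ => Finset.sum_congr rfl fun w _ => ?_
    ring
  have hL : ptraceB ((P ⊗ₖ Q) * M * (P ⊗ₖ Q)ᴴ) j l =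
      ∑ i, ((P ⊗ₖ Q) * M * (P ⊗ₖ Q)ᴴ) (i, j) (i, l) := rfl
  have hM : ∀ c c', ptraceB M c c' = ∑ b, M (b, c) (b, c') := fun _ _ => rfl
  simp only [hL, e]
  rw [Finset.sum_comm]
  have e2 : ∀ w' : Fin dB × Fin dC, ∑ i, ∑ w : Fin dB × Fin dC,
      Q j w.2 * M w w' * star (Q l w'.2) * (P i w.1 * star (P i w'.1)) =
      ∑ c, Q j c * M (w'.1, c) w' * star (Q l w'.2) := by
    intro w'
    rw [Finset.sum_comm]
    simp_rw [← Finset.mul_sum, hP', Fintype.sum_prod_type_right]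
    simp
  simp_rw [e2, Fintype.sum_prod_type_right, Matrix.mul_apply, conjTranspose_apply, hM,
    Finset.mul_sum, Finset.sum_mul]
  exact Finset.sum_congr rfl fun c' _ => Finset.sum_comm

lemma ptraceC_isHermitian {M : Matrix (Fin dB × Fin dC) (Fin dB × Fin dC) ℂ}
    (hM : M.IsHermitian) : (ptraceC M).IsHermitian := by
  ext i k
  simp only [conjTranspose_apply, ptraceC, star_sum]
  exact Finset.sum_congr rfl fun j _ => hM.apply _ _

lemma ptraceB_isHermitian {M : Matrix (Fin dB × Fin dC) (Fin dB × Fin dC) ℂ}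
    (hM : M.IsHermitian) : (ptraceB M).IsHermitian := by
  ext i k
  simp only [conjTranspose_apply, ptraceB, star_sum]
  exact Finset.sum_congr rfl fun j _ => hM.apply _ _

lemma vnEntropy_eq {n : Type*} [Fintype n] [DecidableEq n] {A : Matrix n n ℂ}
    (hA : A.IsHermitian) : vnEntropy A = shannonEntropy hA.eigenvalues := by
  rw [vnEntropy, dif_pos hA, shannonEntropy]

lemma eq_diagonal_of_conj {n : Type*} [Fintype n] [DecidableEq n] {A W D : Matrix n n ℂ}
    (hW : Wᴴ * W = 1) (h : A = W * D * Wᴴ) : Wᴴ * A * W = D := by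
  rw [h, show Wᴴ * (W * D * Wᴴ) * W = (Wᴴ * W) * D * (Wᴴ * W) by simp only [Matrix.mul_assoc], hW,
    Matrix.one_mul, Matrix.mul_one]

/-- The structural part of the theorem: entropy inequalities for the triple `A`, `B`, `C`, and
achievability of every rate bounded by both `S(A)` and `S(B)`. -/
lemma entropies_and_achievable (hA : 0 < dA) {U : Matrix (Fin dB × Fin dC) (Fin dA) ℂ}
    (hU : Uᴴ * U = 1) {ρ : Matrix (Fin dA) (Fin dA) ℂ} (hρ : IsDensityMatrix ρ) :
    vnEntropy ρ ≤ vnEntropy (ptraceC (U * ρ * Uᴴ)) + vnEntropy (ptraceB (U * ρ * Uᴴ)) ∧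
    vnEntropy (ptraceC (U * ρ * Uᴴ)) ≤ vnEntropy ρ + vnEntropy (ptraceB (U * ρ * Uᴴ)) ∧
    ∀ R, R ≤ vnEntropy ρ → R ≤ vnEntropy (ptraceC (U * ρ * Uᴴ)) → AchievableOneWayCB U R := by
  have hρH := hρ.1.isHermitian
  have hMH : (U * ρ * Uᴴ).IsHermitian := (hρ.1.mul_mul_conjTranspose_same U).isHermitian
  have hBH := ptraceC_isHermitian hMH
  have hCH := ptraceB_isHermitian hMH
  rw [vnEntropy_eq hρH, vnEntropy_eq hBH, vnEntropy_eq hCH]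
  obtain ⟨VA, hA1, hA2, hρd⟩ := exists_diagonalization hρH
  obtain ⟨VB, hB1, hB2, hBd⟩ := exists_diagonalization hBH
  obtain ⟨VC, hC1, hC2, hCd⟩ := exists_diagonalization hCH
  have hp0 : ∀ a, 0 ≤ hρH.eigenvalues a := hρ.1.eigenvalues_nonneg
  have hp1 : ∑ a, hρH.eigenvalues a = 1 := by
    have h := hρH.trace_eq_sum_eigenvalues
    rw [hρ.2] at h
    have h' : ((∑ a, hρH.eigenvalues a : ℝ) : ℂ) = 1 := by
      rw [Complex.ofReal_sum]
      exact h.symm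
    exact_mod_cast h'
  set p := hρH.eigenvalues
  set μ := hBH.eigenvalues
  set ν := hCH.eigenvalues
  -- the channel in the eigenbases of `ρ` and of its two output marginals
  set K := VBᴴ ⊗ₖ VCᴴ with hK
  have hKH : Kᴴ = VB ⊗ₖ VC := by
    rw [hK, conjTranspose_kronecker, conjTranspose_conjTranspose, conjTranspose_conjTranspose]
  have hK1 : Kᴴ * K = 1 := by
    rw [hKH, hK, ← mul_kronecker_mul, hB2, hC2, one_kronecker_one]
  set U' := K * U * VA with hU'def
  have hU' : U'ᴴ * U' = 1 := by
    rw [hU'def, conjTranspose_mul, conjTranspose_mul,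
      show VAᴴ * (Uᴴ * Kᴴ) * (K * U * VA) = VAᴴ * (Uᴴ * (Kᴴ * K) * U) * VA by
        simp only [Matrix.mul_assoc], hK1, Matrix.mul_one, hU, Matrix.mul_one, hA1]
  have hrot : U * VA = (VB ⊗ₖ VC) * U' := by
    rw [hU'def, ← hKH, ← Matrix.mul_assoc, ← Matrix.mul_assoc, hK1, Matrix.one_mul]
  -- the output state in the product of the eigenbases
  set s : Fin dA → Fin dB → Fin dC → ℂ := fun a y c => (√(p a) : ℝ) * U' (y, c) a with hs
  have hM' : K * (U * ρ * Uᴴ) * Kᴴ = U' * diagonal (fun a => (p a : ℂ)) * U'ᴴ := by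
    rw [hU'def, conjTranspose_mul, conjTranspose_mul, hρd]
    simp only [Matrix.mul_assoc]
  have hM'e : ∀ w w', (K * (U * ρ * Uᴴ) * Kᴴ) w w' =
      ∑ a, s a w.1 w.2 * star (s a w'.1 w'.2) := by
    intro w w'
    rw [hM', Matrix.mul_apply]
    refine Finset.sum_congr rfl fun a _ => ?_
    rw [Matrix.mul_diagonal, conjTranspose_apply]
    have h : (p a : ℂ) = (√(p a) : ℝ) * (√(p a) : ℝ) := by
      rw [← Complex.ofReal_mul, Real.mul_self_sqrt (hp0 a)]
    rw [h]
    simp only [hs, star_mul', RCLike.star_def, Complex.conj_ofReal]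
    ring
  have hYo : ∀ y y', ∑ z : Fin dA × Fin dC, star (s z.1 y z.2) * s z.1 y' z.2 =
      if y = y' then (μ y : ℂ) else 0 := by
    intro y y'
    have h := congrFun (congrFun (ptraceC_conj (P := VBᴴ) (Q := VCᴴ)
      (by rw [conjTranspose_conjTranspose, hC2]) (U * ρ * Uᴴ)) y') y
    rw [conjTranspose_conjTranspose, eq_diagonal_of_conj hB1 hBd, diagonal_apply] at h
    simp only [ptraceC, ← hK, hM'e] at h
    rw [Fintype.sum_prod_type_right]
    simp only [mul_comm (star _)]
    rw [h]
    by_cases hy : y = y'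
    · simp [hy]
    · simp [hy, Ne.symm hy]
  have hZo : ∀ c c', ∑ z : Fin dA × Fin dB, star (s z.1 z.2 c) * s z.1 z.2 c' =
      if c = c' then (ν c : ℂ) else 0 := by
    intro c c'
    have h := congrFun (congrFun (ptraceB_conj (P := VBᴴ) (Q := VCᴴ)
      (by rw [conjTranspose_conjTranspose, hB2]) (U * ρ * Uᴴ)) c') c
    rw [conjTranspose_conjTranspose, eq_diagonal_of_conj hC1 hCd, diagonal_apply] at h
    simp only [ptraceB, ← hK, hM'e] at h
    rw [Fintype.sum_prod_type_right]
    simp only [mul_comm (star _)]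
    rw [h]
    by_cases hy : c = c'
    · simp [hy]
    · simp [hy, Ne.symm hy]
  have hAo : ∀ a a', ∑ z : Fin dB × Fin dC, star (s a z.1 z.2) * s a' z.1 z.2 =
      if a = a' then (p a : ℂ) else 0 := by
    intro a a'
    have h := congrFun (congrFun hU' a) a'
    simp only [Matrix.mul_apply, conjTranspose_apply, Matrix.one_apply] at h
    have e : ∀ z : Fin dB × Fin dC, star (s a z.1 z.2) * s a' z.1 z.2 =
        ((√(p a) : ℝ) * (√(p a') : ℝ)) * (star (U' z a) * U' z a') := by
      intro z
      simp only [hs, star_mul', RCLike.star_def, Complex.conj_ofReal]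
      ring
    simp_rw [e]
    rw [← Finset.mul_sum, h]
    split_ifs with ha
    · subst ha
      rw [mul_one, ← Complex.ofReal_mul, Real.mul_self_sqrt (hp0 a)]
    · simp
  have hAn : ∀ a, ∑ y, ∑ c, ‖s a y c‖ ^ 2 = p a := by
    intro a
    have := hAo a a
    simp only [if_true, RCLike.star_def, Complex.conj_mul', Fintype.sum_prod_type] at this
    exact_mod_cast this
  have hYn : ∀ y, ∑ a, ∑ c, ‖s a y c‖ ^ 2 = μ y := by
    intro y
    have := hYo y y
    simp only [if_true, RCLike.star_def, Complex.conj_mul', Fintype.sum_prod_type] at this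
    exact_mod_cast this
  have hZn : ∀ c, ∑ a, ∑ y, ‖s a y c‖ ^ 2 = ν c := by
    intro c
    have := hZo c c
    simp only [if_true, RCLike.star_def, Complex.conj_mul', Fintype.sum_prod_type] at this
    exact_mod_cast this
  have hμ1 : ∑ y, μ y = 1 := by
    simp_rw [← hYn]
    rw [Finset.sum_comm]
    simp_rw [hAn, hp1]
  refine ⟨entropy_le_add hAo hYn hZn hp1, ?_, fun R hR1 hR2 => ?_⟩
  · refine entropy_le_add (s := fun y a c => s a y c) hYo hAn (fun c => ?_) hμ1
    rw [Finset.sum_comm, hZn]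
  · refine AchievableOneWayCB.rotate hB1 hB2 hC1 hC2 hrot (achievable_of_diagonal hA hU'
      (fun _ _ _ => rfl) hp0 hp1 (fun y => hYn y ▸ by positivity) hμ1 (fun a a' => ?_) hYo
      (fun c c' hcc => by rw [hZo, if_neg hcc]) hR1 hR2)
    rw [← hAo a a', ← Equiv.sum_comp (Equiv.prodComm _ _)]
    rfl

end Diagonalise

/-- (i) the rate (1/2)·(S(A)+S(B)−S(C)) is achievable with one-way LOCC (C→B)
decoding, and (ii) if S(A) ≤ S(B) then the rate S(A) is achievable. -/
theorem stmt1 (dA dB dC : ℕ) (hA : 0 < dA) (hB : 0 < dB) (hC : 0 < dC)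
    (U : Matrix (Fin dB × Fin dC) (Fin dA) ℂ) (hU : Uᴴ * U = 1)
    (ρ : Matrix (Fin dA) (Fin dA) ℂ) (hρ : IsDensityMatrix ρ) :
    AchievableOneWayCB U ((1 / 2) *
      (vnEntropy ρ + vnEntropy (ptraceC (U * ρ * Uᴴ)) - vnEntropy (ptraceB (U * ρ * Uᴴ)))) ∧
    (vnEntropy ρ ≤ vnEntropy (ptraceC (U * ρ * Uᴴ)) → AchievableOneWayCB U (vnEntropy ρ)) := by
  obtain ⟨h1, h2, h3⟩ := entropies_and_achievable hA hU hρ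
  exact ⟨h3 _ (by linarith) (by linarith), fun h => h3 _ le_rfl h⟩
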